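/- Let n ≥ 4, let L be one of W(n), S(n), or (for n even) S̃(n) over ℂ, and let θ denote the zero weight with respect to the standard Cartan subalgebra H_L. If f ∈ BDer(L)_θ, then f is inner: there exists λ ∈ ℂ such that f(x,y) = λ[x,y] for all x, y ∈ L. -/

import Mathlib

open scoped BigOperators

noncomputable section

namespace CartanSuper

/-- Coordinates of the exterior algebra `Λ(n)` with respect to the monomial basis
`{x_S : S ⊆ {1,…,n}}`. -/
abbrev Lambda (n : ℕ) := Finset (Fin n) → ℂ

/-- Endomorphism algebra of `Λ(n)`. -/
abbrev E (n : ℕ) := Module.End ℂ (Lambda n)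

variable (n : ℕ)

/-- `(−1)^k`. -/
def msign (k : ℕ) : ℂ := (-1 : ℂ) ^ k

/-- The basis monomial `x_S = x_{i₁}⋯x_{i_k}` (indices in increasing order). -/
def mono (S : Finset (Fin n)) : Lambda n := fun T => if T = S then 1 else 0

/-- Number of inversions between `S` and `T`. -/
def inversions (S T : Finset (Fin n)) : ℕ := ((S ×ˢ T).filter fun p => p.2 < p.1).card

/-- The multiplication of `Λ(n)` in coordinates:
`x_S · x_T = (−1)^{inversions} x_{S ∪ T}` for disjoint `S, T` and `0` otherwise. -/
def lmulFun (f g : Lambda n) : Lambda n :=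
  fun U => ∑ S ∈ U.powerset, msign (inversions n S (U \ S)) * f S * g (U \ S)

/-- Left multiplication by an element of `Λ(n)`, as a linear map `Λ(n) →ₗ End Λ(n)`. -/
def mulOp : Lambda n →ₗ[ℂ] E n where
  toFun f :=
    { toFun := lmulFun n f
      map_add' := by
        intro g h; funext U
        simp [lmulFun, mul_add, Finset.sum_add_distrib]
      map_smul' := by
        intro c g; funext U
        simp only [lmulFun, Pi.smul_apply, smul_eq_mul, RingHom.id_apply, Finset.mul_sum]
        exact Finset.sum_congr rfl (by intros; ring) }
  map_add' := by
    intro f g; apply LinearMap.ext; intro h; funext U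
    show lmulFun n (f + g) h U = lmulFun n f h U + lmulFun n g h U
    simp only [lmulFun]
    rw [← Finset.sum_add_distrib]
    exact Finset.sum_congr rfl (by intros; simp [Pi.add_apply]; ring)
  map_smul' := by
    intro c f; apply LinearMap.ext; intro h; funext U
    show lmulFun n (c • f) h U = (c • lmulFun n f h) U
    simp only [lmulFun, Pi.smul_apply, smul_eq_mul, Finset.mul_sum]
    exact Finset.sum_congr rfl (by intros; ring)

/-- The superderivation `∂_i` of `Λ(n)`, in coordinates. -/
def pd (i : Fin n) : E n where
  toFun f := fun S =>
    if i ∈ S then 0 else msign (S.filter (· < i)).card * f (insert i S)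
  map_add' := by
    intro f g; funext S; by_cases h : i ∈ S <;> simp [h, mul_add]
  map_smul' := by
    intro c f; funext S; by_cases h : i ∈ S <;> simp [h] <;> ring

/-- The parity operator `σ` of `Λ(n)`: `σ(x_S) = (−1)^{|S|} x_S`. -/
def par : E n where
  toFun f := fun S => msign S.card * f S
  map_add' := by intro f g; funext S; simp [mul_add]
  map_smul' := by intro c f; funext S; simp; ring

/-- The super-commutator `[D,F] = D∘F − (−1)^{|D||F|} F∘D`, extended bilinearly to all of
`End Λ(n)` using the parity operator `σ`
(for homogeneous `D`, `σ∘D∘σ = (−1)^{|D|} D`). -/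
def sbFun (D F : E n) : E n :=
  D * F - (2:ℂ)⁻¹ • ((F + par n * F * par n) * D + (F - par n * F * par n) * (par n * D * par n))

/-- The super-commutator as a bilinear map. -/
def sbL : E n →ₗ[ℂ] E n →ₗ[ℂ] E n :=
  LinearMap.mk₂ ℂ (sbFun n)
    (fun D D' F => by
      simp only [sbFun, add_mul, sub_mul, mul_add, mul_sub, smul_mul_assoc, mul_smul_comm,
        smul_add, smul_sub]
      module)
    (fun c D F => by
      simp only [sbFun, add_mul, sub_mul, mul_add, mul_sub, smul_mul_assoc, mul_smul_comm,
        smul_add, smul_sub]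
      module)
    (fun D F F' => by
      simp only [sbFun, add_mul, sub_mul, mul_add, mul_sub, smul_mul_assoc, mul_smul_comm,
        smul_add, smul_sub]
      module)
    (fun c D F => by
      simp only [sbFun, add_mul, sub_mul, mul_add, mul_sub, smul_mul_assoc, mul_smul_comm,
        smul_add, smul_sub]
      module)

/-- Shorthand for the super-commutator. -/
def sb (D F : E n) : E n := sbL n D F

/-- The ℤ₂-homogeneous component of `Λ(n)` of parity `p`. -/
def lpar (p : ZMod 2) : Submodule ℂ (Lambda n) where
  carrier := {f | ∀ S : Finset (Fin n), (S.card : ZMod 2) ≠ p → f S = 0}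
  add_mem' := by intro f g hf hg S hS; simp [Pi.add_apply, hf S hS, hg S hS]
  zero_mem' := by intro S hS; rfl
  smul_mem' := by intro c f hf S hS; simp [Pi.smul_apply, hf S hS]

/-- The ℤ-homogeneous component of `Λ(n)` of degree `m` (zero unless `0 ≤ m ≤ n`). -/
def ldeg (m : ℤ) : Submodule ℂ (Lambda n) where
  carrier := {f | ∀ S : Finset (Fin n), (S.card : ℤ) ≠ m → f S = 0}
  add_mem' := by intro f g hf hg S hS; simp [Pi.add_apply, hf S hS, hg S hS]
  zero_mem' := by intro S hS; rfl
  smul_mem' := by intro c f hf S hS; simp [Pi.smul_apply, hf S hS]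

/-- Endomorphisms of `Λ(n)` that are ℤ₂-homogeneous of parity `p`. -/
def epar (p : ZMod 2) : Submodule ℂ (E n) where
  carrier := {D | ∀ (q : ZMod 2), ∀ f ∈ lpar n q, D f ∈ lpar n (q + p)}
  add_mem' := by
    intro D F hD hF q f hf
    simpa [LinearMap.add_apply] using (lpar n (q + p)).add_mem (hD q f hf) (hF q f hf)
  zero_mem' := by intro q f hf; simpa using (lpar n (q + p)).zero_mem
  smul_mem' := by
    intro c D hD q f hf
    simpa [LinearMap.smul_apply] using (lpar n (q + p)).smul_mem c (hD q f hf)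

/-- Endomorphisms of `Λ(n)` that are ℤ-homogeneous of degree `d`. -/
def edeg (d : ℤ) : Submodule ℂ (E n) where
  carrier := {D | ∀ (m : ℤ), ∀ f ∈ ldeg n m, D f ∈ ldeg n (m + d)}
  add_mem' := by
    intro D F hD hF m f hf
    simpa [LinearMap.add_apply] using (ldeg n (m + d)).add_mem (hD m f hf) (hF m f hf)
  zero_mem' := by intro m f hf; simpa using (ldeg n (m + d)).zero_mem
  smul_mem' := by
    intro c D hD m f hf
    simpa [LinearMap.smul_apply] using (ldeg n (m + d)).smul_mem c (hD m f hf)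

/-- The linear map `(f₁,…,f_n) ↦ ∑ᵢ fᵢ ∂ᵢ`. -/
def Wmap : (Fin n → Lambda n) →ₗ[ℂ] E n where
  toFun F := ∑ i, mulOp n (F i) * pd n i
  map_add' := by
    intro F G
    simp only [Pi.add_apply, map_add, add_mul, Finset.sum_add_distrib]
  map_smul' := by
    intro c F
    simp only [RingHom.id_apply, Pi.smul_apply, map_smul, smul_mul_assoc, Finset.smul_sum]

/-- The divergence `(f₁,…,f_n) ↦ ∑ᵢ ∂ᵢ(fᵢ)`. -/
def divMap : (Fin n → Lambda n) →ₗ[ℂ] Lambda n where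
  toFun F := ∑ i, pd n i (F i)
  map_add' := by
    intro F G
    simp only [Pi.add_apply, map_add, Finset.sum_add_distrib]
  map_smul' := by
    intro c F
    simp only [RingHom.id_apply, Pi.smul_apply, map_smul, Finset.smul_sum]

/-- The Witt type Lie superalgebra `W(n) = {∑ fᵢ∂ᵢ : fᵢ ∈ Λ(n)}`. -/
def Wn : Submodule ℂ (E n) := LinearMap.range (Wmap n)

/-- Divergence-free coefficient tuples. -/
def divFree : Submodule ℂ (Fin n → Lambda n) := LinearMap.ker (divMap n)

/-- The special type Lie superalgebra `S(n) = {∑ fᵢ∂ᵢ : ∑ ∂ᵢ(fᵢ) = 0}`. -/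
def Sn : Submodule ℂ (E n) := (divFree n).map (Wmap n)

/-- The top monomial `ω = x₁x₂⋯x_n`. -/
def omegaTop : Lambda n := mono n Finset.univ

/-- `1 − x₁x₂⋯x_n`. -/
def oneM : Lambda n := mono n ∅ - omegaTop n

/-- Multiplication of every coefficient by `1 − x₁⋯x_n`. -/
def oneMScale : (Fin n → Lambda n) →ₗ[ℂ] (Fin n → Lambda n) :=
  LinearMap.pi fun i => (mulOp n (oneM n)) ∘ₗ LinearMap.proj i

/-- The Lie superalgebra `S̃(n) = {(1−x₁⋯x_n)∑ fᵢ∂ᵢ : ∑ ∂ᵢ(fᵢ) = 0}` (`n` even). -/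
def Stn : Submodule ℂ (E n) := (divFree n).map (Wmap n ∘ₗ oneMScale n)

/-- The conjugate index `i'`. -/
def cidx (i : Fin n) : Fin n :=
  ⟨if i.val < n / 2 then i.val + n / 2 else if i.val < 2 * (n / 2) then i.val - n / 2 else i.val,
   by have := i.isLt; split_ifs <;> omega⟩

/-- The linear map `f ↦ D_H(f) = (−1)^{|f|} ∑ᵢ ∂ᵢ(f)∂_{i'}` (the sign is implemented by the
parity operator `σ`, so that this is a single linear map agreeing with `D_H` on homogeneous
elements). -/
def DHmap : Lambda n →ₗ[ℂ] E n where
  toFun f := ∑ i, mulOp n (pd n i (par n f)) * pd n (cidx n i)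
  map_add' := by
    intro f g
    simp only [map_add, add_mul, Finset.sum_add_distrib]
  map_smul' := by
    intro c f
    simp only [RingHom.id_apply, map_smul, smul_mul_assoc, Finset.smul_sum]

/-- Evaluation of the top coefficient. -/
def evalTop : Lambda n →ₗ[ℂ] ℂ := LinearMap.proj Finset.univ

/-- The Hamiltonian Lie superalgebra `H(n) = {D_H(f) : f ∈ ⊕_{i=0}^{n−1} Λ(n)_i}`. -/
def Hn : Submodule ℂ (E n) := (LinearMap.ker (evalTop n)).map (DHmap n)

/-- `H̃(n) = {D_H(f) : f ∈ Λ(n)}`. -/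
def HtN : Submodule ℂ (E n) := LinearMap.range (DHmap n)

/-- The degree derivation `𝒞 = ∑ᵢ xᵢ∂ᵢ`. -/
def CC : E n := ∑ i, mulOp n (mono n {i}) * pd n i

/-- The span of the diagonal elements `xᵢ∂ᵢ`. -/
def diagSpan : Submodule ℂ (E n) :=
  Submodule.span ℂ (Set.range fun i : Fin n => mulOp n (mono n {i}) * pd n i)

/-- The four families of Cartan type Lie superalgebras. -/
inductive CT | W | S | St | H
deriving DecidableEq

/-- Validity of the parameter `n` for each family. -/
def CT.valid : CT → ℕ → Prop
  | .W, n => 4 ≤ n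
  | .S, n => 4 ≤ n
  | .St, n => 4 ≤ n ∧ Even n
  | .H, n => 4 < n

/-- The Cartan type Lie superalgebra `L` itself. -/
def CT.algebra : CT → (n : ℕ) → Submodule ℂ (E n)
  | .W, n => Wn n
  | .S, n => Sn n
  | .St, n => Stn n
  | .H, n => Hn n

/-- The extended algebra `L'`: `L' = L` for `W(n)` and `S̃(n)`, `L' = S(n) ⊕ ℂ𝒞` for `S(n)`,
and `L' = H̃(n) ⊕ ℂ𝒞` for `H(n)`. -/
def CT.prime : CT → (n : ℕ) → Submodule ℂ (E n)
  | .W, n => Wn n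
  | .S, n => Sn n ⊔ Submodule.span ℂ {CC n}
  | .St, n => Stn n
  | .H, n => HtN n ⊔ Submodule.span ℂ {CC n}

/-- The top degree `ξ_L` of the ℤ-grading. -/
def CT.xi : CT → (n : ℕ) → ℤ
  | .W, n => (n : ℤ) - 1
  | .S, n => (n : ℤ) - 2
  | .St, n => (n : ℤ) - 2
  | .H, n => (n : ℤ) - 3

/-- The ℤ-grading component `L_j = L ∩ W(n)_j`; for `S̃(n)` the component of degree `−1`
is `span{(1−x₁⋯x_n)∂ᵢ}` instead. -/
def CT.grade (t : CT) (n : ℕ) (j : ℤ) : Submodule ℂ (E n) :=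
  match t with
  | .St =>
      if j = -1 then
        Submodule.span ℂ (Set.range fun i : Fin n => mulOp n (oneM n) * pd n i)
      else Stn n ⊓ edeg n j
  | t => t.algebra n ⊓ edeg n j

/-- The ℤ-grading component `L'_j` of the extended algebra `L'`. -/
def CT.grade' (t : CT) (n : ℕ) (j : ℤ) : Submodule ℂ (E n) :=
  match t with
  | .St => CT.grade .St n j
  | t => t.prime n ⊓ edeg n j

/-- The standard Cartan subalgebra `H_L` of `L`: the part of the diagonal
`span{xᵢ∂ᵢ}` lying in `L`. -/
def CT.cartan (t : CT) (n : ℕ) : Submodule ℂ (E n) := t.algebra n ⊓ diagSpan n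

/-- The weight space of `M ⊆ End Λ(n)` of weight `μ ∈ H_L^*` under the adjoint action
of the standard Cartan subalgebra of `L`. -/
def wtsp (t : CT) (n : ℕ) (M : Submodule ℂ (E n)) (μ : Module.Dual ℂ (t.cartan n)) :
    Submodule ℂ (E n) where
  carrier := {x | x ∈ M ∧ ∀ h : t.cartan n, sbL n h x = μ h • x}
  add_mem' := by
    rintro x y ⟨hx, hx'⟩ ⟨hy, hy'⟩
    exact ⟨M.add_mem hx hy, fun h => by simp [map_add, hx' h, hy' h, smul_add]⟩
  zero_mem' := ⟨M.zero_mem, fun h => by simp⟩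
  smul_mem' := by
    rintro c x ⟨hx, hx'⟩
    exact ⟨M.smul_mem c hx, fun h => by simp [map_smul, hx' h, smul_comm c]⟩

/-- The set of roots of `M` with respect to the standard Cartan subalgebra of `L`:
the nonzero weights with nonzero weight space. -/
def CT.roots (t : CT) (n : ℕ) (M : Submodule ℂ (E n)) : Set (Module.Dual ℂ (t.cartan n)) :=
  {ε | ε ≠ 0 ∧ wtsp t n M ε ≠ ⊥}

/-- The sign `(−1)^p` for `p ∈ ℤ₂`. -/
def sgn (p : ZMod 2) : ℂ := (-1 : ℂ) ^ p.val

/-- `f` is a super-biderivation of `L` of ℤ₂-degree `pf`: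
a bilinear map with `f(L_α, L_β) ⊆ L_{α+β+pf}` satisfying
`f([x,y],z) = (−1)^{|x||f|}[x,f(y,z)] + (−1)^{|y||z|}[f(x,z),y]` and
`f(x,[y,z]) = [f(x,y),z] + (−1)^{(|f|+|x|)|y|}[y,f(x,z)]` for homogeneous `x,y,z ∈ L`.
(The bilinear map is given as a bilinear map on the ambient space `End Λ(n)`;
only its restriction to `L` is relevant.) -/
structure IsSuperBider (L : Submodule ℂ (E n)) (pf : ZMod 2)
    (f : E n →ₗ[ℂ] E n →ₗ[ℂ] E n) : Prop where
  maps : ∀ (α β : ZMod 2), ∀ x ∈ L ⊓ epar n α, ∀ y ∈ L ⊓ epar n β,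
    f x y ∈ L ⊓ epar n (α + β + pf)
  eq1 : ∀ (α β γ : ZMod 2), ∀ x ∈ L ⊓ epar n α, ∀ y ∈ L ⊓ epar n β, ∀ z ∈ L ⊓ epar n γ,
    f (sbL n x y) z = sgn (α * pf) • sbL n x (f y z) + sgn (β * γ) • sbL n (f x z) y
  eq2 : ∀ (α β γ : ZMod 2), ∀ x ∈ L ⊓ epar n α, ∀ y ∈ L ⊓ epar n β, ∀ z ∈ L ⊓ epar n γ,
    f x (sbL n y z) = sbL n (f x y) z + sgn ((pf + α) * β) • sbL n y (f x z)

/-- `D` is a superderivation of `L` of ℤ₂-degree `p`: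
`D(L_α) ⊆ L_{α+p}` and `D([x,y]) = [D(x),y] + (−1)^{|D||x|}[x,D(y)]` for homogeneous
`x, y ∈ L`. (Given as a linear map on the ambient space `End Λ(n)`.) -/
structure IsSuperDer (L : Submodule ℂ (E n)) (p : ZMod 2)
    (D : E n →ₗ[ℂ] E n) : Prop where
  maps : ∀ (α : ZMod 2), ∀ x ∈ L ⊓ epar n α, D x ∈ L ⊓ epar n (α + p)
  leib : ∀ (α β : ZMod 2), ∀ x ∈ L ⊓ epar n α, ∀ y ∈ L ⊓ epar n β,
    D (sbL n x y) = sbL n (D x) y + sgn (p * α) • sbL n x (D y)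

/-- `f ∈ BDer(L)_ε`: the super-biderivation `f` has weight `ε ∈ H_L^*`, i.e.
`f(L_η, L_ζ) ⊆ L_{ε+η+ζ}` for all weights `η, ζ`. -/
def CT.HasWeight (t : CT) (n : ℕ) (f : E n →ₗ[ℂ] E n →ₗ[ℂ] E n)
    (ε : Module.Dual ℂ (t.cartan n)) : Prop :=
  ∀ (η ζ : Module.Dual ℂ (t.cartan n)),
    ∀ x ∈ wtsp t n (t.algebra n) η, ∀ y ∈ wtsp t n (t.algebra n) ζ,
      f x y ∈ wtsp t n (t.algebra n) (ε + η + ζ)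

/-- `f ∈ BDer(L)_i`: the super-biderivation `f` has ℤ-degree `i`, i.e.
`f(L_j, L_k) ⊆ L_{i+j+k}` for all `j, k ∈ ℤ`. -/
def CT.HasDeg (t : CT) (n : ℕ) (f : E n →ₗ[ℂ] E n →ₗ[ℂ] E n) (i : ℤ) : Prop :=
  ∀ (j k : ℤ), ∀ x ∈ t.grade n j, ∀ y ∈ t.grade n k, f x y ∈ t.grade n (i + j + k)

/-! Let `f` be a super-biderivation of weight zero and `z` a root vector of weight `β ≠ 0`.
Expanding `f([h, x], z)` and `f(z, [h, x])` for `h` in the Cartan subalgebra gives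
`β(h) f(x, z) = ∓[f(h, z), x]` and `β(h) f(z, x) = -[f(z, h), x]`. Both `f(h, z)` and `f(z, h)` lie
in the root space of `z`; when that space is a line, it follows that `f(x, z) = μ_z [x, z]` and
`f(z, x) = ν_z [z, x]` for all `x`. Computing `f(g, g')` in both ways gives `ν_g = μ_{g'}` whenever
`[g, g'] ≠ 0`, which forces a common value `λ` of all the scalars attached to the degree `-1`
elements, to the `x_S ∂_j` with `j ∉ S`, and for `W(n)` to the `x_1 ⋯ x_n ∂_i`. The `y` with
`f(x, y) = λ [x, y]` for all `x` are closed under the bracket, and these root vectors generate the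
algebra. -/

section

variable {n}

/-! ### Operators on the exterior algebra -/

/-- The sign `(−1)^{#{j ∈ U : j < i}}` by which `x_i x_U` differs from `x_{U ∪ {i}}`. -/
def insertSign (i : Fin n) (U : Finset (Fin n)) : ℂ := msign (U.filter (· < i)).card

/-- Left multiplication by the monomial `x_S`. -/
def mulMono (S : Finset (Fin n)) : E n := mulOp n (mono n S)

/-- Left multiplication by the generator `x_i`. -/
def mulX (i : Fin n) : E n := mulMono {i}

lemma msign_mul_self (k : ℕ) : msign k * msign k = 1 := by
  simp [msign, ← pow_add, ← two_mul]

lemma insertSign_mul_self (i : Fin n) (U : Finset (Fin n)) :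
    insertSign i U * insertSign i U = 1 :=
  msign_mul_self _

lemma insertSign_ne_zero (i : Fin n) (U : Finset (Fin n)) : insertSign i U ≠ 0 :=
  left_ne_zero_of_mul_eq_one (insertSign_mul_self i U)

lemma insertSign_insert (i : Fin n) {j : Fin n} {U : Finset (Fin n)} (hj : j ∉ U) :
    insertSign i (insert j U) = if j < i then -insertSign i U else insertSign i U := by
  unfold insertSign msign
  rw [Finset.filter_insert]
  split_ifs
  · rw [Finset.card_insert_of_notMem (by simp [hj]), pow_succ, mul_neg_one]
  · rfl

lemma insertSign_erase (i : Fin n) {j : Fin n} {U : Finset (Fin n)} (hj : j ∈ U) :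
    insertSign i (U.erase j) = if j < i then -insertSign i U else insertSign i U := by
  have h := insertSign_insert i (Finset.notMem_erase j U)
  rw [Finset.insert_erase hj] at h
  split_ifs at h ⊢ <;> simp [h]

lemma insertSign_insert_self {i : Fin n} {U : Finset (Fin n)} (hi : i ∉ U) :
    insertSign i (insert i U) = insertSign i U := by
  simpa using insertSign_insert i hi

lemma insertSign_erase_self {i : Fin n} {U : Finset (Fin n)} (hi : i ∈ U) :
    insertSign i (U.erase i) = insertSign i U := by
  simpa using insertSign_erase i hi

lemma insertSign_eq_mul_sdiff {S U : Finset (Fin n)} (h : S ⊆ U) (i : Fin n) :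
    insertSign i U = insertSign i S * insertSign i (U \ S) := by
  have hdisj : Disjoint (S.filter (· < i)) ((U \ S).filter (· < i)) :=
    Finset.disjoint_filter_filter Finset.disjoint_sdiff
  rw [insertSign, insertSign, insertSign, msign, msign, msign, ← pow_add,
    ← Finset.card_union_of_disjoint hdisj, ← Finset.filter_union, Finset.union_sdiff_of_subset h]

lemma inversions_singleton (i : Fin n) (U : Finset (Fin n)) :
    inversions n {i} U = (U.filter (· < i)).card := by
  rw [inversions, Finset.singleton_product, Finset.filter_map, Finset.card_map]
  rfl

lemma inversions_insert {i : Fin n} {S : Finset (Fin n)} (hi : i ∉ S) (U : Finset (Fin n)) :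
    inversions n (insert i S) U = inversions n {i} U + inversions n S U := by
  unfold inversions
  rw [Finset.insert_eq, Finset.union_product, Finset.filter_union, Finset.card_union_of_disjoint]
  exact Finset.disjoint_filter_filter (Finset.disjoint_product.2 (.inl (by simpa using hi)))

lemma pd_apply (i : Fin n) (g : Lambda n) (U : Finset (Fin n)) :
    pd n i g U = if i ∈ U then 0 else insertSign i U * g (insert i U) := rfl

lemma mulMono_apply (S : Finset (Fin n)) (g : Lambda n) (U : Finset (Fin n)) :
    mulMono S g U = if S ⊆ U then msign (inversions n S (U \ S)) * g (U \ S) else 0 := by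
  change lmulFun n (mono n S) g U = _
  simp only [lmulFun, mono, mul_ite, mul_one, mul_zero, ite_mul, zero_mul,
    Finset.sum_ite_eq', Finset.mem_powerset]

lemma mulX_apply (i : Fin n) (g : Lambda n) (U : Finset (Fin n)) :
    mulX i g U = if i ∈ U then insertSign i U * g (U.erase i) else 0 := by
  rw [mulX, mulMono_apply]
  simp only [Finset.singleton_subset_iff, inversions_singleton, Finset.sdiff_singleton_eq_erase]
  refine if_ctx_congr Iff.rfl (fun hi => ?_) fun _ => rfl
  rw [← insertSign_erase_self hi, insertSign]

lemma mulMono_empty : mulMono (∅ : Finset (Fin n)) = 1 := by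
  refine LinearMap.ext fun g => funext fun U => ?_
  simp [mulMono_apply, inversions, msign]

lemma mulX_mul_mulMono {i : Fin n} {S : Finset (Fin n)} (hi : i ∉ S) :
    mulX i * mulMono S = insertSign i S • mulMono (insert i S) := by
  refine LinearMap.ext fun g => funext fun U => ?_
  rw [Module.End.mul_apply, LinearMap.smul_apply, Pi.smul_apply, mulX_apply, mulMono_apply,
    mulMono_apply, smul_eq_mul]
  by_cases hU : insert i S ⊆ U
  · obtain ⟨hiU, hSU⟩ := Finset.insert_subset_iff.1 hU
    have hsdiff : U.erase i \ S = U \ insert i S := by grind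
    have hsign : insertSign i U = insertSign i S * insertSign i (U \ insert i S) := by
      rw [← insertSign_erase_self hiU,
        insertSign_eq_mul_sdiff (Finset.subset_erase.2 ⟨hSU, hi⟩), hsdiff]
    rw [if_pos hiU, if_pos (Finset.subset_erase.2 ⟨hSU, hi⟩), if_pos hU, hsdiff,
      inversions_insert hi, inversions_singleton, hsign]
    simp only [insertSign, msign, pow_add]
    ring
  · rw [if_neg hU, mul_zero]
    split_ifs with hiU hSU
    · exact absurd (Finset.insert_subset hiU (hSU.trans (Finset.erase_subset i U))) hU
    · exact mul_zero _
    · rfl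

lemma mulMono_insert {i : Fin n} {S : Finset (Fin n)} (hi : i ∉ S) :
    mulMono (insert i S) = insertSign i S • (mulX i * mulMono S) := by
  rw [mulX_mul_mulMono hi, smul_smul, insertSign_mul_self, one_smul]

/- `neg_mul` and `mul_neg` do not rewrite in `E n`, where negation is found as `LinearMap.instNeg`
rather than through the ring structure. -/
lemma end_neg_mul (D F : E n) : -D * F = -(D * F) := neg_mul D F

lemma end_mul_neg (D F : E n) : D * -F = -(D * F) := mul_neg D F

lemma pd_mul_pd (i j : Fin n) : pd n i * pd n j = -(pd n j * pd n i) := by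
  refine LinearMap.ext fun g => funext fun U => ?_
  simp only [Module.End.mul_apply, LinearMap.neg_apply, Pi.neg_apply, pd_apply]
  obtain rfl | hij := eq_or_ne i j
  · simp
  by_cases hi : i ∈ U
  · simp [hi]
  by_cases hj : j ∈ U
  · simp [hj]
  simp only [hi, hj, Finset.mem_insert, hij, hij.symm, or_self, if_false, insertSign_insert _ hi,
    insertSign_insert _ hj, Finset.insert_comm i j U]
  rcases lt_or_gt_of_ne hij with h | h <;> simp [h, h.not_gt, mul_left_comm]

lemma mulX_mul_mulX (i j : Fin n) : mulX i * mulX j = -(mulX j * mulX i) := by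
  refine LinearMap.ext fun g => funext fun U => ?_
  simp only [Module.End.mul_apply, LinearMap.neg_apply, Pi.neg_apply, mulX_apply]
  obtain rfl | hij := eq_or_ne i j
  · simp
  by_cases hi : i ∈ U
  swap
  · simp [hi]
  by_cases hj : j ∈ U
  swap
  · simp [hj]
  simp only [hi, hj, Finset.mem_erase, ne_eq, hij, hij.symm, not_false_eq_true, and_self, if_true,
    insertSign_erase _ hi, insertSign_erase _ hj, Finset.erase_right_comm (a := i) (b := j)]
  rcases lt_or_gt_of_ne hij with h | h <;> simp [h, h.not_gt, mul_left_comm]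

lemma pd_mul_mulX_of_ne {i j : Fin n} (hij : i ≠ j) : pd n i * mulX j = -(mulX j * pd n i) := by
  refine LinearMap.ext fun g => funext fun U => ?_
  simp only [Module.End.mul_apply, LinearMap.neg_apply, Pi.neg_apply, mulX_apply, pd_apply]
  by_cases hi : i ∈ U
  · simp [hi, hij]
  by_cases hj : j ∈ U
  swap
  · simp [hi, hj, hij.symm]
  simp only [hi, hj, Finset.mem_erase, Finset.mem_insert, or_true, if_true, insertSign_erase _ hj,
    insertSign_insert _ hi, Finset.erase_insert_of_ne hij, and_false, if_false]
  rcases lt_or_gt_of_ne hij with h | h <;> simp [h, h.not_gt, mul_left_comm]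

lemma pd_mul_mulX_self (i : Fin n) : pd n i * mulX i = 1 - mulX i * pd n i := by
  refine LinearMap.ext fun g => funext fun U => ?_
  simp only [Module.End.mul_apply, LinearMap.sub_apply, Pi.sub_apply, mulX_apply, pd_apply,
    Module.End.one_apply]
  by_cases hi : i ∈ U
  · simp [hi, insertSign_erase_self hi, ← mul_assoc, insertSign_mul_self]
  · simp [hi, insertSign_insert_self hi, ← mul_assoc, insertSign_mul_self]

lemma pd_mul_mulMono {j : Fin n} {S : Finset (Fin n)} (hj : j ∉ S) :
    pd n j * mulMono S = msign S.card • (mulMono S * pd n j) := by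
  induction S using Finset.induction_on with
  | empty => simp [mulMono_empty, msign]
  | insert i S hi ih =>
    obtain ⟨hji, hjS⟩ := not_or.1 (Finset.mem_insert.not.1 hj)
    rw [mulMono_insert hi, Finset.card_insert_of_notMem hi, mul_smul_comm, ← mul_assoc,
      pd_mul_mulX_of_ne hji, end_neg_mul, mul_assoc, ih hjS]
    simp only [msign, pow_succ, mul_smul_comm, smul_mul_assoc, mul_assoc]
    module

lemma mulX_comm_mulMono (j : Fin n) (S : Finset (Fin n)) :
    mulX j * mulMono S = msign S.card • (mulMono S * mulX j) := by
  induction S using Finset.induction_on with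
  | empty => simp [mulMono_empty, msign]
  | insert i S hi ih =>
    rw [mulMono_insert hi, Finset.card_insert_of_notMem hi, mul_smul_comm, ← mul_assoc,
      mulX_mul_mulX j i, end_neg_mul, mul_assoc, ih]
    simp only [msign, pow_succ, mul_smul_comm, smul_mul_assoc, mul_assoc]
    module

/-! ### Parity and the super-commutator -/

lemma zmod_two_eq_zero_or_one (p : ZMod 2) : p = 0 ∨ p = 1 := by
  revert p
  decide

lemma sgn_zero : sgn 0 = 1 := pow_zero _

lemma sgn_one : sgn 1 = -1 := pow_one _

lemma sgn_add (p q : ZMod 2) : sgn (p + q) = sgn p * sgn q := by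
  rcases zmod_two_eq_zero_or_one p with rfl | rfl <;>
    rcases zmod_two_eq_zero_or_one q with rfl | rfl <;>
    simp [sgn_zero, sgn_one, CharTwo.add_self_eq_zero]

lemma sgn_mul_self (p : ZMod 2) : sgn p * sgn p = 1 := by
  rw [← sgn_add, CharTwo.add_self_eq_zero, sgn_zero]

lemma sgn_natCast (k : ℕ) : sgn (k : ZMod 2) = msign k := by
  induction k with
  | zero => simp [sgn_zero, msign]
  | succ k ih => rw [Nat.cast_succ, sgn_add, ih, sgn_one, msign, msign, pow_succ]

lemma mono_mem_lpar (T : Finset (Fin n)) : mono n T ∈ lpar n (T.card : ZMod 2) :=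
  fun _ hS => if_neg (ne_of_apply_ne (fun U => (U.card : ZMod 2)) hS)

lemma end_ext_mono {D F : E n} (h : ∀ T, D (mono n T) = F (mono n T)) : D = F := by
  refine LinearMap.pi_ext' fun T => LinearMap.ext_ring ?_
  have hT : LinearMap.single ℂ (fun _ : Finset (Fin n) => ℂ) T 1 = mono n T := by
    funext U
    simp [mono, Pi.single_apply]
  simpa only [LinearMap.comp_apply, hT] using h T

lemma par_apply_of_mem_lpar {p : ZMod 2} {g : Lambda n} (hg : g ∈ lpar n p) :
    par n g = sgn p • g := by
  funext S
  change msign S.card * g S = sgn p * g S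
  by_cases hS : (S.card : ZMod 2) = p
  · rw [← hS, sgn_natCast]
  · rw [hg S hS, mul_zero, mul_zero]

lemma par_mul_mul_par {p : ZMod 2} {D : E n} (hD : D ∈ epar n p) :
    par n * D * par n = sgn p • D := by
  refine end_ext_mono fun T => ?_
  rw [Module.End.mul_apply, Module.End.mul_apply, par_apply_of_mem_lpar (mono_mem_lpar T),
    map_smul, map_smul, par_apply_of_mem_lpar (hD _ _ (mono_mem_lpar T)), smul_smul, sgn_add,
    ← mul_assoc, sgn_mul_self, one_mul, LinearMap.smul_apply]

lemma eq_zero_of_mem_epar_zero_of_mem_epar_one {D : E n} (h₀ : D ∈ epar n 0)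
    (h₁ : D ∈ epar n 1) : D = 0 := by
  by_contra hD
  have h : sgn 1 = sgn 0 :=
    smul_left_injective ℂ hD ((par_mul_mul_par h₁).symm.trans (par_mul_mul_par h₀))
  norm_num [sgn_zero, sgn_one] at h

lemma mul_mem_epar {p q : ZMod 2} {D F : E n} (hD : D ∈ epar n p) (hF : F ∈ epar n q) :
    D * F ∈ epar n (p + q) := by
  intro r g hg
  rw [add_comm p, ← add_assoc]
  exact hD _ _ (hF r g hg)

lemma pd_mem_epar (i : Fin n) : pd n i ∈ epar n 1 := by
  intro r g hg S hS
  rw [pd_apply]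
  split_ifs with hi
  · rfl
  · rw [hg, mul_zero]
    rintro rfl
    apply hS
    rw [Finset.card_insert_of_notMem hi, Nat.cast_succ, add_assoc, CharTwo.add_self_eq_zero,
      add_zero]

lemma mulX_mem_epar (i : Fin n) : mulX i ∈ epar n 1 := by
  intro r g hg S hS
  rw [mulX_apply]
  split_ifs with hi
  · rw [hg, mul_zero]
    rintro rfl
    exact hS (by rw [← Finset.card_erase_add_one hi, Nat.cast_succ])
  · rfl

lemma mulMono_mem_epar (S : Finset (Fin n)) : mulMono S ∈ epar n (S.card : ZMod 2) := by
  induction S using Finset.induction_on with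
  | empty =>
    intro r g hg
    simpa [mulMono_empty] using hg
  | insert i S hi ih =>
    rw [mulMono_insert hi, Finset.card_insert_of_notMem hi, Nat.cast_succ, add_comm]
    exact Submodule.smul_mem _ _ (mul_mem_epar (mulX_mem_epar i) ih)

lemma sbL_of_mem_epar {p q : ZMod 2} {D F : E n} (hD : D ∈ epar n p) (hF : F ∈ epar n q) :
    sbL n D F = D * F - sgn (p * q) • (F * D) := by
  change sbFun n D F = _
  rw [sbFun, par_mul_mul_par hD, par_mul_mul_par hF]
  rcases zmod_two_eq_zero_or_one p with rfl | rfl <;>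
    rcases zmod_two_eq_zero_or_one q with rfl | rfl <;>
    simp only [mul_zero, mul_one, sgn_zero, sgn_one, one_smul, add_mul, sub_mul,
      mul_smul_comm, smul_mul_assoc] <;>
    module

lemma sbL_of_mem_epar_zero {D : E n} (hD : D ∈ epar n 0) (F : E n) :
    sbL n D F = D * F - F * D := by
  change sbFun n D F = _
  rw [sbFun, par_mul_mul_par hD]
  simp only [sgn_zero, one_smul, add_mul, sub_mul]
  module

lemma sbL_mem_epar {p q : ZMod 2} {D F : E n} (hD : D ∈ epar n p) (hF : F ∈ epar n q) :
    sbL n D F ∈ epar n (p + q) := by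
  rw [sbL_of_mem_epar hD hF]
  exact sub_mem (mul_mem_epar hD hF)
    (Submodule.smul_mem _ _ (add_comm q p ▸ mul_mem_epar hF hD))

lemma sbL_antisymm {p q : ZMod 2} {D F : E n} (hD : D ∈ epar n p) (hF : F ∈ epar n q) :
    sbL n D F = -(sgn (p * q) • sbL n F D) := by
  rw [sbL_of_mem_epar hD hF, sbL_of_mem_epar hF hD, mul_comm q p, smul_sub, smul_smul,
    sgn_mul_self]
  module

lemma sbL_leibniz {p q r : ZMod 2} {x y z : E n} (hx : x ∈ epar n p) (hy : y ∈ epar n q)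
    (hz : z ∈ epar n r) :
    sbL n x (sbL n y z) = sbL n (sbL n x y) z + sgn (p * q) • sbL n y (sbL n x z) := by
  rw [sbL_of_mem_epar hx (sbL_mem_epar hy hz), sbL_of_mem_epar (sbL_mem_epar hx hy) hz,
    sbL_of_mem_epar hy (sbL_mem_epar hx hz), sbL_of_mem_epar hx hy, sbL_of_mem_epar hy hz,
    sbL_of_mem_epar hx hz]
  have hsq (a : ℂ) : sgn (p * q) * (sgn (p * q) * a) = a := by
    rw [← mul_assoc, sgn_mul_self, one_mul]
  simp only [mul_add, add_mul, sgn_add, mul_sub, sub_mul, mul_smul_comm, smul_mul_assoc,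
    smul_sub, smul_smul, mul_assoc, mul_comm q p, hsq]
  module

/-! ### Monomial vector fields -/

/-- The monomial vector field `x_S ∂_i`. -/
def monoField (S : Finset (Fin n)) (i : Fin n) : E n := mulMono S * pd n i

lemma map_eq_sum_mono {V : Type*} [AddCommGroup V] [Module ℂ V] (φ : Lambda n →ₗ[ℂ] V)
    (g : Lambda n) : φ g = ∑ S, g S • φ (mono n S) := by
  have hg : g = ∑ S, g S • mono n S := by
    funext U
    simp [mono, Finset.sum_apply]
  conv_lhs => rw [hg]
  simp only [map_sum, map_smul]

lemma pd_mono_of_notMem {i : Fin n} {T : Finset (Fin n)} (hi : i ∉ T) : pd n i (mono n T) = 0 := by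
  funext U
  rw [pd_apply, Pi.zero_apply, ite_eq_left_iff]
  rintro -
  rw [mono, if_neg (ne_of_mem_of_not_mem' (Finset.mem_insert_self i U) hi), mul_zero]

lemma mulX_mono {i : Fin n} {T : Finset (Fin n)} (hi : i ∉ T) :
    mulX i (mono n T) = insertSign i T • mono n (insert i T) := by
  funext U
  rw [mulX_apply, Pi.smul_apply, smul_eq_mul, mono, mono]
  by_cases hU : U = insert i T
  · simp [hU, hi, insertSign_insert_self hi]
  · rw [if_neg hU, mul_zero, ite_eq_right_iff]
    intro hiU
    have hne : U.erase i ≠ T := fun h => hU (h ▸ (Finset.insert_erase hiU).symm)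
    rw [if_neg hne, mul_zero]

lemma pd_mulX_mono {i : Fin n} {T : Finset (Fin n)} (hi : i ∉ T) :
    pd n i (mulX i (mono n T)) = mono n T := by
  rw [← Module.End.mul_apply, pd_mul_mulX_self, LinearMap.sub_apply, Module.End.one_apply,
    Module.End.mul_apply, pd_mono_of_notMem hi, map_zero, sub_zero]

lemma pd_mono_singleton (i j : Fin n) : pd n i (mono n {j}) = if i = j then mono n ∅ else 0 := by
  split_ifs with h
  · have hX : mulX j (mono n ∅) = mono n {j} := by
      simp [mulX_mono (Finset.notMem_empty j), insertSign, msign]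
    rw [h, ← hX, pd_mulX_mono (Finset.notMem_empty j)]
  · exact pd_mono_of_notMem (Finset.notMem_singleton.2 h)

lemma mulOp_apply_mono_empty (g : Lambda n) : mulOp n g (mono n ∅) = g := by
  funext U
  change lmulFun n g (mono n ∅) U = g U
  rw [lmulFun, Finset.sum_eq_single_of_mem U (Finset.mem_powerset_self U)]
  · simp [mono, inversions, msign]
  · intro S hS hSU
    have hne : U \ S ≠ ∅ := fun h => hSU
      ((Finset.mem_powerset.1 hS).antisymm (Finset.sdiff_eq_empty_iff_subset.1 h))
    rw [mono, if_neg hne, mul_zero]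

lemma mulOp_mul_pd_apply_mono_singleton (g : Lambda n) (i j : Fin n) :
    (mulOp n g * pd n i) (mono n {j}) = if i = j then g else 0 := by
  rw [Module.End.mul_apply, pd_mono_singleton]
  split_ifs
  · exact mulOp_apply_mono_empty g
  · exact map_zero _

lemma monoField_apply_mono_singleton (S : Finset (Fin n)) (i j : Fin n) :
    monoField S i (mono n {j}) = if i = j then mono n S else 0 :=
  mulOp_mul_pd_apply_mono_singleton _ i j

lemma Wmap_apply_mono_singleton (F : Fin n → Lambda n) (i : Fin n) :
    Wmap n F (mono n {i}) = F i := by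
  change (∑ k, mulOp n (F k) * pd n k) (mono n {i}) = F i
  simp only [LinearMap.sum_apply, mulOp_mul_pd_apply_mono_singleton, Finset.sum_ite_eq',
    Finset.mem_univ, if_true]

lemma Wmap_single (i : Fin n) (g : Lambda n) : Wmap n (Pi.single i g) = mulOp n g * pd n i := by
  change ∑ k, mulOp n ((Pi.single i g : Fin n → Lambda n) k) * pd n k = _
  rw [Finset.sum_eq_single_of_mem i (Finset.mem_univ i), Pi.single_eq_same]
  intro k _ hk
  rw [Pi.single_eq_of_ne hk, map_zero, zero_mul]

lemma Wn_ext {D F : E n} (hD : D ∈ Wn n) (hF : F ∈ Wn n)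
    (h : ∀ i, D (mono n {i}) = F (mono n {i})) : D = F := by
  obtain ⟨G, rfl⟩ := hD
  obtain ⟨G', rfl⟩ := hF
  simp only [Wmap_apply_mono_singleton] at h
  rw [funext h]

lemma mulOp_mul_pd_mem_Wn (g : Lambda n) (i : Fin n) : mulOp n g * pd n i ∈ Wn n :=
  ⟨Pi.single i g, Wmap_single i g⟩

lemma eq_smul_monoField {D : E n} (hD : D ∈ Wn n) (A : Finset (Fin n)) (a : Fin n)
    (h : ∀ S i, D (mono n {i}) S ≠ 0 → S = A ∧ i = a) :
    D = D (mono n {a}) A • monoField A a := by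
  refine Wn_ext hD (Submodule.smul_mem _ _ (mulOp_mul_pd_mem_Wn _ a)) fun i => funext fun S => ?_
  rw [LinearMap.smul_apply, monoField_apply_mono_singleton, Pi.smul_apply, smul_eq_mul]
  by_cases hD0 : D (mono n {i}) S = 0
  · obtain rfl | hi := eq_or_ne a i
    · obtain rfl | hS := eq_or_ne S A
      · simp [hD0]
      · simp [hD0, mono, hS]
    · simp [hD0, hi]
  · obtain ⟨rfl, rfl⟩ := h S i hD0
    simp [mono]

lemma monoField_singleton_apply (k : Fin n) (g : Lambda n) (U : Finset (Fin n)) :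
    monoField {k} k g U = if k ∈ U then g U else 0 := by
  change mulX k (pd n k g) U = _
  rw [mulX_apply]
  refine if_ctx_congr Iff.rfl (fun hk => ?_) fun _ => rfl
  rw [pd_apply, if_neg (Finset.notMem_erase k U), Finset.insert_erase hk,
    insertSign_erase_self hk, ← mul_assoc, insertSign_mul_self, one_mul]

lemma monoField_mem_epar (S : Finset (Fin n)) (i : Fin n) :
    monoField S i ∈ epar n ((S.card : ZMod 2) + 1) :=
  mul_mem_epar (mulMono_mem_epar S) (pd_mem_epar i)

lemma monoField_singleton_mem_epar (k i : Fin n) : monoField {k} i ∈ epar n 0 := by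
  rw [← CharTwo.add_self_eq_zero (1 : ZMod 2)]
  exact mul_mem_epar (mulX_mem_epar k) (pd_mem_epar i)

/-! ### The Cartan subalgebra and its weights -/

/-- The coefficient of `x_k ∂_k` in an operator on `Λ(n)`, read off at `x_k`. -/
def diagEntry (k : Fin n) : E n →ₗ[ℂ] ℂ :=
  LinearMap.proj {k} ∘ₗ LinearMap.applyₗ (mono n {k})

/-- The weight of `x_S ∂_i` as a linear form: on the diagonal element `∑ₖ aₖ x_k ∂_k` it takes the
value `∑_{k ∈ S} aₖ − aᵢ`. -/
def weightForm (S : Finset (Fin n)) (i : Fin n) : E n →ₗ[ℂ] ℂ :=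
  ∑ k ∈ S, diagEntry k - diagEntry i

/-- The weight of `x_S ∂_i` with respect to the Cartan subalgebra of the algebra of type `t`. -/
def monoWeight (t : CT) (S : Finset (Fin n)) (i : Fin n) : Module.Dual ℂ (t.cartan n) :=
  (weightForm S i).domRestrict (t.cartan n)

/-- The coefficient of the `k`-th coordinate form in `weightForm S i`. -/
def weightCoord (S : Finset (Fin n)) (i k : Fin n) : ℤ :=
  (if k ∈ S then 1 else 0) - if k = i then 1 else 0

lemma weightForm_apply (S : Finset (Fin n)) (i : Fin n) (h : E n) :
    weightForm S i h = ∑ k ∈ S, diagEntry k h - diagEntry i h := by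
  rw [weightForm, LinearMap.sub_apply, LinearMap.sum_apply]

lemma diagEntry_monoField_singleton (k l : Fin n) :
    diagEntry k (monoField {l} l) = if k = l then 1 else 0 := by
  change monoField {l} l (mono n {k}) {k} = _
  simp [monoField_singleton_apply, mono, eq_comm]

lemma weightForm_monoField_singleton (S : Finset (Fin n)) (i k : Fin n) :
    weightForm S i (monoField {k} k) = weightCoord S i k := by
  simp [weightForm_apply, diagEntry_monoField_singleton, weightCoord, eq_comm]

lemma mem_epar_zero_of_mem_diagSpan {h : E n} (hh : h ∈ diagSpan n) : h ∈ epar n 0 := by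
  refine Submodule.span_le.2 ?_ hh
  rintro _ ⟨i, rfl⟩
  exact monoField_singleton_mem_epar i i

lemma diagSpan_apply {h : E n} (hh : h ∈ diagSpan n) (g : Lambda n) (U : Finset (Fin n)) :
    h g U = (∑ k ∈ U, diagEntry k h) * g U := by
  induction hh using Submodule.span_induction with
  | mem h hh =>
    obtain ⟨i, rfl⟩ := hh
    change monoField {i} i g U = (∑ k ∈ U, diagEntry k (monoField {i} i)) * g U
    simp [monoField_singleton_apply, diagEntry_monoField_singleton]
  | zero => simp
  | add h h' _ _ hh hh' =>
    simp only [LinearMap.add_apply, Pi.add_apply, map_add, Finset.sum_add_distrib, hh, hh',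
      add_mul]
  | smul a h _ hh =>
    simp only [LinearMap.smul_apply, Pi.smul_apply, map_smul, smul_eq_mul, ← Finset.mul_sum, hh,
      mul_assoc]

lemma sbL_monoField_of_mem_diagSpan {h : E n} (hh : h ∈ diagSpan n) (S : Finset (Fin n))
    (i : Fin n) : sbL n h (monoField S i) = weightForm S i h • monoField S i := by
  rw [sbL_of_mem_epar_zero (mem_epar_zero_of_mem_diagSpan hh)]
  refine LinearMap.ext fun g => funext fun U => ?_
  simp only [monoField, LinearMap.sub_apply, Pi.sub_apply, LinearMap.smul_apply, Pi.smul_apply,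
    Module.End.mul_apply, diagSpan_apply hh, mulMono_apply, pd_apply, smul_eq_mul,
    weightForm_apply]
  by_cases hS : S ⊆ U
  · by_cases hi : i ∈ U \ S
    · simp [hi]
    · simp only [hS, hi, if_true, if_false, Finset.sum_insert hi, ← Finset.sum_sdiff hS]
      ring
  · simp [hS]

lemma sbL_apply_mono_singleton {h : E n} (hh : h ∈ diagSpan n) (D : E n) (S : Finset (Fin n))
    (i : Fin n) : sbL n h D (mono n {i}) S = weightForm S i h * D (mono n {i}) S := by
  have hi : h (mono n {i}) = diagEntry i h • mono n {i} := by
    funext U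
    rw [diagSpan_apply hh, Pi.smul_apply, smul_eq_mul]
    by_cases hU : U = {i}
    · simp [hU]
    · simp [mono, hU]
  rw [sbL_of_mem_epar_zero (mem_epar_zero_of_mem_diagSpan hh), LinearMap.sub_apply, Pi.sub_apply,
    Module.End.mul_apply, Module.End.mul_apply, diagSpan_apply hh, hi, map_smul, Pi.smul_apply,
    smul_eq_mul, weightForm_apply, sub_mul]

lemma monoWeight_eq_of_coeff_ne_zero {t : CT} {M : Submodule ℂ (E n)}
    {η : Module.Dual ℂ (t.cartan n)} {D : E n} (hD : D ∈ wtsp t n M η) {S : Finset (Fin n)}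
    {i : Fin n} (hc : D (mono n {i}) S ≠ 0) : monoWeight t S i = η := by
  ext h
  apply mul_right_cancel₀ hc
  rw [← smul_eq_mul (η h), ← Pi.smul_apply, ← LinearMap.smul_apply, ← hD.2 h]
  exact (sbL_apply_mono_singleton h.2.2 D S i).symm

lemma mem_wtsp_of_monoField {t : CT} {M : Submodule ℂ (E n)} {S : Finset (Fin n)} {i : Fin n}
    (hM : monoField S i ∈ M) : monoField S i ∈ wtsp t n M (monoWeight t S i) :=
  ⟨hM, fun h => sbL_monoField_of_mem_diagSpan h.2.2 S i⟩

/-! ### Spanning sets of the three algebras -/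

/-- The element `u` of `Λ(n)` for which the algebra of type `t` has degree `−1` part spanned by the
`u ∂_k`: `1 − x₁⋯x_n` for `S̃(n)`, and `1` otherwise. -/
def unitElt (n : ℕ) (t : CT) : Lambda n := if t = CT.St then oneM n else mono n ∅

/-- The element `u ∂_k` of degree `−1` in the algebra of type `t`. -/
def lowering (t : CT) (k : Fin n) : E n := mulOp n (unitElt n t) * pd n k

/-- The divergence-free field `x_i x_T ∂_i − x_j x_T ∂_j`. -/
def diffField (T : Finset (Fin n)) (i j : Fin n) : E n :=
  mulX i * monoField T i - mulX j * monoField T j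

/-- The coefficient tuples `(f₁,…,f_n)` parametrising `W(n)`, `S(n)` or `S̃(n)`. -/
def coeffSpace (n : ℕ) (t : CT) : Submodule ℂ (Fin n → Lambda n) :=
  if t = CT.W then ⊤ else divFree n

/-- The parametrisation of `W(n)`, `S(n)` or `S̃(n)` by coefficient tuples. -/
def toField (n : ℕ) (t : CT) : (Fin n → Lambda n) →ₗ[ℂ] E n :=
  if t = CT.St then Wmap n ∘ₗ oneMScale n else Wmap n

lemma algebra_eq_map {t : CT} (ht : t ≠ CT.H) :
    t.algebra n = (coeffSpace n t).map (toField n t) := by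
  cases t
  · exact LinearMap.range_eq_map _
  · rfl
  · rfl
  · exact absurd rfl ht

lemma toField_mem_Wn (t : CT) (F : Fin n → Lambda n) : toField n t F ∈ Wn n := by
  rw [toField]
  split_ifs
  · exact ⟨oneMScale n F, rfl⟩
  · exact ⟨F, rfl⟩

lemma algebra_le_Wn {t : CT} (ht : t ≠ CT.H) : t.algebra n ≤ Wn n := by
  rw [algebra_eq_map ht, Submodule.map_le_iff_le_comap]
  exact fun F _ => toField_mem_Wn t F

lemma mulMono_univ_apply (g : Lambda n) : mulMono Finset.univ g = g ∅ • omegaTop n := by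
  funext U
  rw [mulMono_apply, Pi.smul_apply, omegaTop, mono]
  by_cases hU : U = Finset.univ
  · simp [hU, inversions, msign]
  · rw [if_neg (fun h => hU (Finset.univ_subset_iff.1 h)), if_neg hU, smul_zero]

lemma mulOp_oneM_apply (g : Lambda n) : mulOp n (oneM n) g = g - g ∅ • omegaTop n := by
  rw [oneM, map_sub, LinearMap.sub_apply, ← mulMono_univ_apply]
  exact congrArg (· - _) (LinearMap.congr_fun mulMono_empty g)

lemma oneMScale_single (j : Fin n) (g : Lambda n) :
    oneMScale n (Pi.single j g) = Pi.single j (g - g ∅ • omegaTop n) := by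
  rw [← mulOp_oneM_apply]
  exact funext fun i => Pi.apply_single (fun _ => mulOp n (oneM n)) (fun _ => map_zero _) j g i

lemma toField_single {t : CT} (j : Fin n) {g : Lambda n} (hg : g ∅ = 0) :
    toField n t (Pi.single j g) = mulOp n g * pd n j := by
  rw [toField]
  split_ifs
  · rw [LinearMap.comp_apply, oneMScale_single, hg, zero_smul, sub_zero, Wmap_single]
  · exact Wmap_single j g

lemma toField_single_one (t : CT) (k : Fin n) :
    toField n t (Pi.single k (mono n ∅)) = lowering t k := by
  rw [toField, lowering, unitElt]
  split_ifs
  · rw [LinearMap.comp_apply, oneMScale_single, Wmap_single, oneM, mono, if_pos rfl, one_smul]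
  · exact Wmap_single k _

lemma toField_single_mono {t : CT} {S : Finset (Fin n)} (hS : S.Nonempty) (j : Fin n) :
    toField n t (Pi.single j (mono n S)) = monoField S j :=
  toField_single j (if_neg hS.ne_empty.symm)

lemma toField_single_mulX_mono (t : CT) {T : Finset (Fin n)} {i : Fin n} (hi : i ∉ T) :
    toField n t (Pi.single i (mulX i (mono n T))) = mulX i * monoField T i := by
  rw [toField_single i (by rw [mulX_apply, if_neg (Finset.notMem_empty i)]), mulX_mono hi,
    monoField, ← mul_assoc, mulX_mul_mulMono hi, map_smul]
  rfl

lemma divMap_single (i : Fin n) (g : Lambda n) : divMap n (Pi.single i g) = pd n i g := by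
  change ∑ k, pd n k ((Pi.single i g : Fin n → Lambda n) k) = _
  rw [Finset.sum_eq_single_of_mem i (Finset.mem_univ i), Pi.single_eq_same]
  intro k _ hk
  rw [Pi.single_eq_of_ne hk, map_zero]

lemma single_mono_mem_coeffSpace {t : CT} {S : Finset (Fin n)} {j : Fin n}
    (hj : j ∈ S → t = CT.W) : Pi.single j (mono n S) ∈ coeffSpace n t := by
  rw [coeffSpace]
  split_ifs with ht
  · exact Submodule.mem_top
  · rw [divFree, LinearMap.mem_ker, divMap_single, pd_mono_of_notMem fun h => ht (hj h)]

lemma single_sub_single_mem_coeffSpace (t : CT) {T : Finset (Fin n)} {i j : Fin n}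
    (hi : i ∉ T) (hj : j ∉ T) :
    Pi.single i (mulX i (mono n T)) - Pi.single j (mulX j (mono n T)) ∈ coeffSpace n t := by
  rw [coeffSpace]
  split_ifs
  · exact Submodule.mem_top
  · rw [divFree, LinearMap.mem_ker, map_sub, divMap_single, divMap_single, pd_mulX_mono hi,
      pd_mulX_mono hj, sub_self]

lemma toField_mem_algebra {t : CT} (ht : t ≠ CT.H) {F : Fin n → Lambda n}
    (hF : F ∈ coeffSpace n t) : toField n t F ∈ t.algebra n := by
  rw [algebra_eq_map ht]
  exact Submodule.mem_map_of_mem hF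

lemma monoField_mem_algebra {t : CT} (ht : t ≠ CT.H) {S : Finset (Fin n)} (hS : S.Nonempty)
    {j : Fin n} (hj : j ∈ S → t = CT.W) : monoField S j ∈ t.algebra n :=
  toField_single_mono (t := t) hS j ▸ toField_mem_algebra ht (single_mono_mem_coeffSpace hj)

lemma lowering_mem_algebra {t : CT} (ht : t ≠ CT.H) (k : Fin n) : lowering t k ∈ t.algebra n :=
  toField_single_one t k ▸
    toField_mem_algebra ht (single_mono_mem_coeffSpace fun h => absurd h (Finset.notMem_empty k))

lemma toField_single_sub_single (t : CT) {T : Finset (Fin n)} {i j : Fin n} (hi : i ∉ T)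
    (hj : j ∉ T) :
    toField n t (Pi.single i (mulX i (mono n T)) - Pi.single j (mulX j (mono n T))) =
      diffField T i j := by
  rw [map_sub, toField_single_mulX_mono t hi, toField_single_mulX_mono t hj, diffField]

lemma diffField_mem_algebra {t : CT} (ht : t ≠ CT.H) {T : Finset (Fin n)} {i j : Fin n}
    (hi : i ∉ T) (hj : j ∉ T) : diffField T i j ∈ t.algebra n :=
  toField_single_sub_single t hi hj ▸
    toField_mem_algebra ht (single_sub_single_mem_coeffSpace t hi hj)

lemma single_mem_of_forall_mono {M : Submodule ℂ (Fin n → Lambda n)} {i : Fin n} {g : Lambda n}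
    (h : ∀ S, g S ≠ 0 → Pi.single i (mono n S) ∈ M) : Pi.single i g ∈ M := by
  change LinearMap.single ℂ (fun _ => Lambda n) i g ∈ M
  rw [map_eq_sum_mono]
  refine sum_mem fun S _ => ?_
  by_cases hS : g S = 0
  · rw [hS, zero_smul]
    exact zero_mem M
  · exact M.smul_mem _ (h S hS)

lemma sum_single_mulX_mem {M : Submodule ℂ (Fin n → Lambda n)} {G : Fin n → Lambda n}
    (hsum : ∑ i, G i = 0) (hG : ∀ i T, i ∈ T → G i T = 0)
    (hM : ∀ T i j, i ∉ T → j ∉ T →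
      Pi.single i (mulX i (mono n T)) - Pi.single j (mulX j (mono n T)) ∈ M) :
    ∑ i, Pi.single i (mulX i (G i)) ∈ M := by
  set φ : (i : Fin n) → Lambda n →ₗ[ℂ] Fin n → Lambda n :=
    fun i => LinearMap.single ℂ (fun _ => Lambda n) i ∘ₗ mulX i
  have hφ : ∑ i, φ i (G i) = ∑ T, ∑ i, G i T • φ i (mono n T) := by
    rw [Finset.sum_comm]
    exact Finset.sum_congr rfl fun i _ => map_eq_sum_mono (φ i) (G i)
  change ∑ i, φ i (G i) ∈ M
  rw [hφ]
  refine sum_mem fun T _ => ?_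
  by_cases hT : ∃ j, j ∉ T
  · obtain ⟨j, hj⟩ := hT
    have hsumT : ∑ i, G i T = 0 := by
      rw [← Finset.sum_apply, hsum, Pi.zero_apply]
    have hsub : ∑ i, G i T • φ i (mono n T) =
        ∑ i, G i T • (φ i (mono n T) - φ j (mono n T)) := by
      simp only [smul_sub, Finset.sum_sub_distrib, ← Finset.sum_smul, hsumT, zero_smul, sub_zero]
    rw [hsub]
    refine sum_mem fun i _ => ?_
    by_cases hi : i ∈ T
    · rw [hG i T hi, zero_smul]
      exact zero_mem M
    · exact M.smul_mem _ (hM T i j hi hj)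
  · push Not at hT
    refine sum_mem fun i _ => ?_
    rw [hG i T (hT i), zero_smul]
    exact zero_mem M

lemma divFree_le {M : Submodule ℂ (Fin n → Lambda n)}
    (hmono : ∀ S j, j ∉ S → Pi.single j (mono n S) ∈ M)
    (hdiff : ∀ T i j, i ∉ T → j ∉ T →
      Pi.single i (mulX i (mono n T)) - Pi.single j (mulX j (mono n T)) ∈ M) :
    divFree n ≤ M := by
  intro F hF
  have hpd_mem (i : Fin n) (g : Lambda n) (S : Finset (Fin n)) (hi : i ∈ S) : pd n i g S = 0 :=
    if_pos hi
  have hsplit (i : Fin n) : F i = pd n i (mulX i (F i)) + mulX i (pd n i (F i)) := by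
    rw [← Module.End.mul_apply, pd_mul_mulX_self, LinearMap.sub_apply, Module.End.mul_apply,
      Module.End.one_apply, sub_add_cancel]
  have hF_eq : F = ∑ i, Pi.single i (pd n i (mulX i (F i))) +
      ∑ i, Pi.single i (mulX i (pd n i (F i))) := by
    rw [Finset.univ_sum_single, Finset.univ_sum_single]
    exact funext hsplit
  rw [hF_eq]
  refine add_mem (sum_mem fun i _ => single_mem_of_forall_mono fun S hS => hmono S i ?_)
    (sum_single_mulX_mem hF (fun i T hi => hpd_mem i _ T hi) hdiff)
  exact fun hi => hS (hpd_mem i _ S hi)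

lemma algebra_le {t : CT} (ht : t ≠ CT.H) {M : Submodule ℂ (E n)}
    (hlow : ∀ k, lowering t k ∈ M)
    (hmono : ∀ (S : Finset (Fin n)) j, S.Nonempty → (j ∈ S → t = CT.W) → monoField S j ∈ M)
    (hdiff : ∀ (T : Finset (Fin n)) i j, i ∉ T → j ∉ T → diffField T i j ∈ M) :
    t.algebra n ≤ M := by
  have hsingle (S : Finset (Fin n)) (j : Fin n) (hj : j ∈ S → t = CT.W) :
      Pi.single j (mono n S) ∈ M.comap (toField n t) := by
    rw [Submodule.mem_comap]
    rcases S.eq_empty_or_nonempty with rfl | hS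
    · rw [toField_single_one]
      exact hlow j
    · rw [toField_single_mono hS]
      exact hmono S j hS hj
  rw [algebra_eq_map ht, Submodule.map_le_iff_le_comap, coeffSpace]
  split_ifs with hW
  · intro F _
    rw [← Finset.univ_sum_single F]
    exact sum_mem fun i _ => single_mem_of_forall_mono fun S _ => hsingle S i fun _ => hW
  · refine divFree_le (fun S j hj => hsingle S j fun h => absurd h hj) fun T i j hi hj => ?_
    rw [Submodule.mem_comap, toField_single_sub_single t hi hj]
    exact hdiff T i j hi hj

/-! ### Generation by root vectors -/

lemma mulX_mul_monoField {i : Fin n} {T : Finset (Fin n)} (hi : i ∉ T) (j : Fin n) :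
    mulX i * monoField T j = insertSign i T • monoField (insert i T) j := by
  rw [monoField, ← mul_assoc, mulX_mul_mulMono hi, smul_mul_assoc, monoField]

lemma mulX_mul_monoField_mem_epar (i : Fin n) (T : Finset (Fin n)) (j : Fin n) :
    mulX i * monoField T j ∈ epar n (T.card : ZMod 2) := by
  have h := mul_mem_epar (mulX_mem_epar i) (monoField_mem_epar T j)
  rwa [add_left_comm, CharTwo.add_self_eq_zero, add_zero] at h

lemma commute_monoField_singleton_mulMono {i : Fin n} {T : Finset (Fin n)} (hi : i ∉ T)
    (j : Fin n) : Commute (monoField {j} i) (mulMono T) := by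
  change mulX j * pd n i * mulMono T = mulMono T * (mulX j * pd n i)
  rw [mul_assoc, pd_mul_mulMono hi, mul_smul_comm, ← mul_assoc, mulX_comm_mulMono, smul_mul_assoc,
    smul_smul, msign_mul_self, one_smul, mul_assoc]

lemma monoField_singleton_mul_mulX (i j : Fin n) :
    monoField {j} i * mulX i = mulX i * monoField {j} i + mulX j := by
  change mulX j * pd n i * mulX i = mulX i * (mulX j * pd n i) + mulX j
  rw [mul_assoc, pd_mul_mulX_self, mul_sub, mul_one, ← mul_assoc, ← mul_assoc, mulX_mul_mulX j i,
    end_neg_mul, sub_neg_eq_add, add_comm]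

lemma pd_mul_monoField_singleton (i j : Fin n) :
    pd n j * monoField {j} i = monoField {j} i * pd n j + pd n i := by
  change pd n j * (mulX j * pd n i) = mulX j * pd n i * pd n j + pd n i
  rw [← mul_assoc, pd_mul_mulX_self, sub_mul, one_mul, mul_assoc, mul_assoc, pd_mul_pd j i,
    end_mul_neg, sub_neg_eq_add, add_comm]

lemma diffField_eq_sbL {T : Finset (Fin n)} {i : Fin n} (hi : i ∉ T) (j : Fin n) :
    diffField T i j = sbL n (mulX i * monoField T j) (monoField {j} i) := by
  set F := monoField {j} i
  have hF : F ∈ epar n 0 := monoField_singleton_mem_epar j i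
  have hcomm : F * mulMono T = mulMono T * F := commute_monoField_singleton_mulMono hi j
  have hleft : mulX i * monoField T j * F =
      mulX i * (F * monoField T j) + mulX i * monoField T i := by
    simp only [monoField]
    rw [mul_assoc, mul_assoc, pd_mul_monoField_singleton, mul_add, mul_add, ← mul_assoc F, hcomm,
      mul_assoc (mulMono T)]
  have hright : F * (mulX i * monoField T j) =
      mulX i * (F * monoField T j) + mulX j * monoField T j := by
    rw [← mul_assoc, monoField_singleton_mul_mulX, add_mul, mul_assoc]
  rw [sbL_of_mem_epar (mulX_mul_monoField_mem_epar i T j) hF, mul_zero, sgn_zero, one_smul, hleft,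
    hright, add_sub_add_left_eq_sub, diffField]

lemma monoField_eq_sbL {T : Finset (Fin n)} {k : Fin n} (hk : k ∉ T) (i : Fin n) :
    monoField T i = sbL n (pd n k) (mulX k * monoField T i) := by
  have hanti : pd n k * monoField T i = -(sgn (T.card : ZMod 2) • (monoField T i * pd n k)) := by
    rw [monoField, ← mul_assoc, pd_mul_mulMono hk, smul_mul_assoc, mul_assoc, pd_mul_pd k i,
      end_mul_neg, smul_neg, sgn_natCast, mul_assoc]
  rw [sbL_of_mem_epar (pd_mem_epar k) (mulX_mul_monoField_mem_epar k T i), one_mul, ← mul_assoc,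
    pd_mul_mulX_self, sub_mul, one_mul, mul_assoc, hanti, end_mul_neg, mul_smul_comm, mul_assoc,
    sub_neg_eq_add, add_sub_cancel_right]

lemma lowering_of_ne {t : CT} (ht : t ≠ CT.St) (k : Fin n) : lowering t k = pd n k := by
  rw [lowering, unitElt, if_neg ht]
  exact (congrArg (· * pd n k) mulMono_empty).trans (one_mul _)

/-- `M` is closed under brackets of homogeneous elements of `L`. -/
def IsBracketClosedIn (L M : Submodule ℂ (E n)) : Prop :=
  ∀ p q, ∀ y ∈ L ⊓ epar n p, ∀ z ∈ L ⊓ epar n q, y ∈ M → z ∈ M → sbL n y z ∈ M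

lemma monoField_mem_of_univ {M : Submodule ℂ (E n)} (hM : IsBracketClosedIn (Wn n) M)
    (hlow : ∀ k, pd n k ∈ M) {i : Fin n} (htop : monoField Finset.univ i ∈ M)
    (S : Finset (Fin n)) : monoField S i ∈ M := by
  suffices ∀ C : Finset (Fin n), monoField Cᶜ i ∈ M by simpa using this Sᶜ
  intro C
  induction C using Finset.induction_on with
  | empty => simpa using htop
  | insert k C hk ih =>
    have hk' : k ∉ (insert k C)ᶜ := by simp
    rw [monoField_eq_sbL hk', mulX_mul_monoField hk', Finset.insert_compl_insert hk, map_smul]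
    have hpd : pd n k ∈ Wn n :=
      lowering_of_ne (t := CT.W) (by decide) k ▸ lowering_mem_algebra (t := CT.W) (by decide) k
    exact M.smul_mem _ (hM _ _ _ ⟨hpd, pd_mem_epar k⟩ _
      ⟨mulOp_mul_pd_mem_Wn _ i, monoField_mem_epar _ i⟩ (hlow k) ih)

lemma diffField_self (T : Finset (Fin n)) (i : Fin n) : diffField T i i = 0 := sub_self _

lemma algebra_le_of_isBracketClosedIn {t : CT} (ht : t ≠ CT.H) {M : Submodule ℂ (E n)}
    (hM : IsBracketClosedIn (t.algebra n) M) (hlow : ∀ k, lowering t k ∈ M)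
    (hroot : ∀ (S : Finset (Fin n)) j, S.Nonempty → j ∉ S → monoField S j ∈ M)
    (htop : t = CT.W → ∀ i, monoField Finset.univ i ∈ M) : t.algebra n ≤ M := by
  refine algebra_le ht hlow (fun S j hS hj => ?_) fun T i j hi hj => ?_
  · by_cases hjS : j ∈ S
    · obtain rfl := hj hjS
      exact monoField_mem_of_univ hM
        (fun k => lowering_of_ne (t := CT.W) (by decide) k ▸ hlow k) (htop rfl j) S
    · exact hroot S j hS hjS
  · rcases eq_or_ne i j with rfl | hij
    · rw [diffField_self]
      exact zero_mem M
    have hjT : j ∉ insert i T := by simp [hij.symm, hj]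
    have hij' : i ∉ ({j} : Finset (Fin n)) := by simpa using hij
    rw [diffField_eq_sbL hi, mulX_mul_monoField hi, map_smul, LinearMap.smul_apply]
    refine M.smul_mem _ (hM _ _ _ ⟨?_, monoField_mem_epar (insert i T) j⟩ _
      ⟨?_, monoField_singleton_mem_epar j i⟩ (hroot _ j (Finset.insert_nonempty i T) hjT)
      (hroot _ i (Finset.singleton_nonempty j) hij'))
    · exact monoField_mem_algebra ht (Finset.insert_nonempty i T) fun h => absurd h hjT
    · exact monoField_mem_algebra ht (Finset.singleton_nonempty j) fun h => absurd h hij'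

/-! ### Biderivations of weight zero -/

/-- The parity-homogeneous weight vectors of the algebra of type `t`. -/
def weightVectors (t : CT) (n : ℕ) : Set (E n) :=
  {x | (∃ α, x ∈ epar n α) ∧ ∃ η, x ∈ wtsp t n (t.algebra n) η}

/-- `g` is parity-homogeneous and spans the weight space of some nonzero weight of the algebra of
type `t`. -/
def IsRootVector (t : CT) (g : E n) : Prop :=
  (∃ γ, g ∈ epar n γ) ∧ ∃ β ≠ 0, wtsp t n (t.algebra n) β = ℂ ∙ g

/-- The vectors `x` for which `f(x, ·)` is `λ[x, ·]` on `L`. -/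
def leftInner (L : Submodule ℂ (E n)) (f : E n →ₗ[ℂ] E n →ₗ[ℂ] E n) (lam : ℂ) : Set (E n) :=
  {x | ∀ y ∈ L, f x y = lam • sbL n x y}

/-- The vectors `y` for which `f(·, y)` is `λ[·, y]` on `L`. -/
def rightInner (L : Submodule ℂ (E n)) (f : E n →ₗ[ℂ] E n →ₗ[ℂ] E n) (lam : ℂ) :
    Submodule ℂ (E n) where
  carrier := {y | ∀ x ∈ L, f x y = lam • sbL n x y}
  add_mem' hy hz x hx := by rw [map_add, map_add, hy x hx, hz x hx, smul_add]
  zero_mem' x _ := by rw [map_zero, map_zero, smul_zero]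
  smul_mem' c y hy x hx := by rw [map_smul, map_smul, hy x hx, smul_comm]

section Biderivation

variable {t : CT} {pf : ZMod 2} {f : E n →ₗ[ℂ] E n →ₗ[ℂ] E n}

lemma coe_cartan_mem_wtsp_zero (h : t.cartan n) : (h : E n) ∈ wtsp t n (t.algebra n) 0 := by
  refine ⟨h.2.1, fun h' => ?_⟩
  rw [sbL_of_mem_epar_zero (mem_epar_zero_of_mem_diagSpan h'.2.2), LinearMap.zero_apply, zero_smul,
    sub_eq_zero]
  refine LinearMap.ext fun g => funext fun U => ?_
  simp only [Module.End.mul_apply, diagSpan_apply h.2.2, diagSpan_apply h'.2.2, mul_left_comm]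

lemma coe_cartan_mem_inf_epar_zero (h : t.cartan n) : (h : E n) ∈ t.algebra n ⊓ epar n 0 :=
  ⟨h.2.1, mem_epar_zero_of_mem_diagSpan h.2.2⟩

lemma IsRootVector.mem_weightVectors {g : E n} (hg : IsRootVector t g) :
    g ∈ weightVectors t n := by
  obtain ⟨hγ, β, -, hβ⟩ := hg
  exact ⟨hγ, β, hβ ▸ Submodule.mem_span_singleton_self g⟩

lemma weight_smul_apply_right (hf : IsSuperBider n (t.algebra n) pf f) (hw : t.HasWeight n f 0)
    {α γ : ZMod 2} {η β : Module.Dual ℂ (t.cartan n)} {x z : E n} (hxα : x ∈ epar n α)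
    (hxη : x ∈ wtsp t n (t.algebra n) η) (hzγ : z ∈ epar n γ)
    (hzβ : z ∈ wtsp t n (t.algebra n) β) (h : t.cartan n) :
    β h • f x z = -(sgn (α * γ) • sbL n (f h z) x) := by
  have hder := hf.eq1 0 α γ h (coe_cartan_mem_inf_epar_zero h) x ⟨hxη.1, hxα⟩ z ⟨hzβ.1, hzγ⟩
  rw [hxη.2 h, (hw η β x hxη z hzβ).2 h, zero_mul, sgn_zero, one_smul, zero_add, map_smul,
    LinearMap.smul_apply, LinearMap.add_apply, add_smul, add_assoc, left_eq_add] at hder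
  exact eq_neg_of_add_eq_zero_left hder

lemma weight_smul_apply_left (hf : IsSuperBider n (t.algebra n) pf f) (hw : t.HasWeight n f 0)
    {α γ : ZMod 2} {η β : Module.Dual ℂ (t.cartan n)} {x z : E n} (hxα : x ∈ epar n α)
    (hxη : x ∈ wtsp t n (t.algebra n) η) (hzγ : z ∈ epar n γ)
    (hzβ : z ∈ wtsp t n (t.algebra n) β) (h : t.cartan n) :
    β h • f z x = -sbL n (f z h) x := by
  have hder := hf.eq2 γ 0 α z ⟨hzβ.1, hzγ⟩ h (coe_cartan_mem_inf_epar_zero h) x ⟨hxη.1, hxα⟩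
  rw [hxη.2 h, (hw β η z hzβ x hxη).2 h, mul_zero, sgn_zero, one_smul, zero_add, map_smul,
    LinearMap.add_apply, add_smul, ← add_assoc, right_eq_add] at hder
  exact eq_neg_of_add_eq_zero_right hder

lemma exists_mem_rightInner (hf : IsSuperBider n (t.algebra n) pf f) (hw : t.HasWeight n f 0)
    (hsp : t.algebra n ≤ Submodule.span ℂ (weightVectors t n)) {g : E n}
    (hg : IsRootVector t g) : ∃ lam, g ∈ rightInner (t.algebra n) f lam := by
  obtain ⟨⟨γ, hγ⟩, β, hβ0, hβ⟩ := hg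
  have hgβ : g ∈ wtsp t n (t.algebra n) β := hβ ▸ Submodule.mem_span_singleton_self g
  obtain ⟨h, hh⟩ := DFunLike.ne_iff.1 hβ0
  have hfh : f h g ∈ ℂ ∙ g := by
    have := hw 0 β h (coe_cartan_mem_wtsp_zero h) g hgβ
    rwa [zero_add, zero_add, hβ] at this
  obtain ⟨c, hc⟩ := Submodule.mem_span_singleton.1 hfh
  refine ⟨(β h)⁻¹ * c, fun x hx => ?_⟩
  refine LinearMap.eqOn_span (f := f.flip g) (g := ((β h)⁻¹ * c) • (sbL n).flip g) ?_ (hsp hx)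
  rintro x ⟨⟨α, hxα⟩, η, hxη⟩
  change f x g = ((β h)⁻¹ * c) • sbL n x g
  rw [mul_smul, eq_inv_smul_iff₀ hh, weight_smul_apply_right hf hw hxα hxη hγ hgβ h, ← hc,
    map_smul, LinearMap.smul_apply, smul_comm, sbL_antisymm hxα hγ, smul_neg]

lemma exists_mem_leftInner (hf : IsSuperBider n (t.algebra n) pf f) (hw : t.HasWeight n f 0)
    (hsp : t.algebra n ≤ Submodule.span ℂ (weightVectors t n)) {g : E n}
    (hg : IsRootVector t g) : ∃ lam, g ∈ leftInner (t.algebra n) f lam := by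
  obtain ⟨⟨γ, hγ⟩, β, hβ0, hβ⟩ := hg
  have hgβ : g ∈ wtsp t n (t.algebra n) β := hβ ▸ Submodule.mem_span_singleton_self g
  obtain ⟨h, hh⟩ := DFunLike.ne_iff.1 hβ0
  have hfh : f g h ∈ ℂ ∙ g := by
    have := hw β 0 g hgβ h (coe_cartan_mem_wtsp_zero h)
    rwa [zero_add, add_zero, hβ] at this
  obtain ⟨c, hc⟩ := Submodule.mem_span_singleton.1 hfh
  refine ⟨(β h)⁻¹ * -c, fun x hx => ?_⟩
  refine LinearMap.eqOn_span (f := f g) (g := ((β h)⁻¹ * -c) • sbL n g) ?_ (hsp hx)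
  rintro x ⟨⟨α, hxα⟩, η, hxη⟩
  rw [LinearMap.smul_apply, mul_smul, eq_inv_smul_iff₀ hh,
    weight_smul_apply_left hf hw hxα hxη hγ hgβ h, ← hc, map_smul, LinearMap.smul_apply, neg_smul]

lemma mem_rightInner_of_mem_leftInner (hf : IsSuperBider n (t.algebra n) pf f)
    (hw : t.HasWeight n f 0) (hsp : t.algebra n ≤ Submodule.span ℂ (weightVectors t n))
    {x y : E n} {lam : ℂ} (hx : x ∈ leftInner (t.algebra n) f lam) (hxL : x ∈ t.algebra n)
    (hy : IsRootVector t y) (hxy : sbL n x y ≠ 0) : y ∈ rightInner (t.algebra n) f lam := by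
  obtain ⟨mu, hmu⟩ := exists_mem_rightInner hf hw hsp hy
  obtain ⟨-, η, hη⟩ := hy.mem_weightVectors
  obtain rfl : lam = mu := smul_left_injective ℂ hxy ((hx y hη.1).symm.trans (hmu x hxL))
  exact hmu

lemma mem_leftInner_of_mem_rightInner (hf : IsSuperBider n (t.algebra n) pf f)
    (hw : t.HasWeight n f 0) (hsp : t.algebra n ≤ Submodule.span ℂ (weightVectors t n))
    {x y : E n} {lam : ℂ} (hy : y ∈ rightInner (t.algebra n) f lam) (hyL : y ∈ t.algebra n)
    (hx : IsRootVector t x) (hxy : sbL n x y ≠ 0) : x ∈ leftInner (t.algebra n) f lam := by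
  obtain ⟨mu, hmu⟩ := exists_mem_leftInner hf hw hsp hx
  obtain ⟨-, η, hη⟩ := hx.mem_weightVectors
  obtain rfl : lam = mu := smul_left_injective ℂ hxy ((hy x hη.1).symm.trans (hmu y hyL))
  exact hmu

lemma smul_sbL_eq_zero_of_odd (hf : IsSuperBider n (t.algebra n) 1 f) {α β : ZMod 2} {x y : E n}
    {lam : ℂ} (hx : x ∈ t.algebra n ⊓ epar n α) (hy : y ∈ t.algebra n ⊓ epar n β)
    (hxy : f x y = lam • sbL n x y) : lam • sbL n x y = 0 := by
  have hodd : lam • sbL n x y ∈ epar n (α + β + 1) := hxy ▸ (hf.maps α β x hx y hy).2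
  have heven : lam • sbL n x y ∈ epar n (α + β) := Submodule.smul_mem _ _ (sbL_mem_epar hx.2 hy.2)
  rcases zmod_two_eq_zero_or_one (α + β) with h | h
  · rw [h] at hodd heven
    exact eq_zero_of_mem_epar_zero_of_mem_epar_one heven (by simpa using hodd)
  · rw [h, CharTwo.add_self_eq_zero] at hodd
    exact eq_zero_of_mem_epar_zero_of_mem_epar_one hodd (h ▸ heven)

lemma isBracketClosedIn_rightInner (hf : IsSuperBider n (t.algebra n) pf f)
    (hsp : t.algebra n ≤ Submodule.span ℂ (weightVectors t n)) (lam : ℂ) :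
    IsBracketClosedIn (t.algebra n) (rightInner (t.algebra n) f lam) := by
  intro β γ y hyL z hzL hy hz x hx
  refine LinearMap.eqOn_span (f := f.flip (sbL n y z)) (g := lam • (sbL n).flip (sbL n y z)) ?_
    (hsp hx)
  rintro x ⟨⟨α, hxα⟩, η, hxη⟩
  change f x (sbL n y z) = lam • sbL n x (sbL n y z)
  rw [hf.eq2 α β γ x ⟨hxη.1, hxα⟩ y hyL z hzL, sbL_leibniz hxα hyL.2 hzL.2, smul_add,
    smul_comm lam, hy x hxη.1, hz x hxη.1, map_smul, LinearMap.smul_apply, map_smul]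
  rcases zmod_two_eq_zero_or_one pf with rfl | rfl
  · rw [zero_add]
  · -- For odd `f` the two sides differ by a sign, but then both vanish by parity.
    have hxz := smul_sbL_eq_zero_of_odd hf ⟨hxη.1, hxα⟩ hzL (hz x hxη.1)
    rw [← map_smul (sbL n y), hxz, map_zero, smul_zero, smul_zero]

end Biderivation

/-! ### Root vectors -/

lemma unitElt_apply_empty [Nonempty (Fin n)] (t : CT) : unitElt n t ∅ = 1 := by
  rw [unitElt]
  split_ifs
  · simp [oneM, omegaTop, mono, Finset.univ_nonempty.ne_empty.symm]
  · simp [mono]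

lemma unitElt_apply_univ [Nonempty (Fin n)] (t : CT) :
    unitElt n t Finset.univ = if t = CT.St then -1 else 0 := by
  rw [unitElt]
  split_ifs
  · simp [oneM, omegaTop, mono, Finset.univ_nonempty.ne_empty]
  · simp [mono, Finset.univ_nonempty.ne_empty]

lemma unitElt_apply_of_ne (t : CT) {S : Finset (Fin n)} (h₀ : S ≠ ∅) (h₁ : S ≠ Finset.univ) :
    unitElt n t S = 0 := by
  rw [unitElt]
  split_ifs
  · simp [oneM, omegaTop, mono, h₀, h₁]
  · simp [mono, h₀]

lemma lowering_St (k : Fin n) : lowering CT.St k = monoField ∅ k - monoField Finset.univ k := by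
  rw [lowering, unitElt, if_pos rfl, oneM, map_sub, sub_mul]
  rfl

lemma lowering_apply_mono_singleton (t : CT) (k j : Fin n) :
    lowering t k (mono n {j}) = if k = j then unitElt n t else 0 :=
  mulOp_mul_pd_apply_mono_singleton _ k j

lemma lowering_mem_epar {t : CT} (hev : t = CT.St → Even n) (k : Fin n) :
    lowering t k ∈ epar n 1 := by
  by_cases ht : t = CT.St
  · subst ht
    have huniv := monoField_mem_epar Finset.univ k
    rw [Finset.card_univ, Fintype.card_fin, ZMod.natCast_eq_zero_iff_even.2 (hev rfl), zero_add]
      at huniv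
    rw [lowering_St]
    refine sub_mem ?_ huniv
    simpa using monoField_mem_epar ∅ k
  · exact lowering_of_ne ht k ▸ pd_mem_epar k

lemma coeff_univ_eq_zero {F : Fin n → Lambda n} (hF : F ∈ divFree n) (a : Fin n) :
    F a Finset.univ = 0 := by
  have hdiv : divMap n F (Finset.univ.erase a) = 0 := congrFun hF _
  change (∑ i, pd n i (F i)) (Finset.univ.erase a) = 0 at hdiv
  rw [Finset.sum_apply, Finset.sum_eq_single_of_mem a (Finset.mem_univ a)] at hdiv
  · simpa [pd_apply, insertSign_ne_zero] using hdiv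
  · intro i _ hi
    rw [pd_apply, if_pos (by simpa using hi)]

lemma sum_coeff_singleton_eq_zero {F : Fin n → Lambda n} (hF : F ∈ divFree n) :
    ∑ i, F i {i} = 0 := by
  have hdiv : divMap n F ∅ = 0 := congrFun hF _
  change (∑ i, pd n i (F i)) ∅ = 0 at hdiv
  rw [Finset.sum_apply] at hdiv
  simpa [pd_apply, insertSign, msign] using hdiv

lemma Wmap_oneMScale_apply_mono_singleton (F : Fin n → Lambda n) (i : Fin n) :
    Wmap n (oneMScale n F) (mono n {i}) = F i - F i ∅ • omegaTop n := by
  rw [Wmap_apply_mono_singleton, ← mulOp_oneM_apply]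
  rfl

lemma apply_mono_singleton_univ {t : CT} (ht : t ≠ CT.H) (hW : t ≠ CT.W) {D : E n}
    (hD : D ∈ t.algebra n) (a : Fin n) :
    D (mono n {a}) Finset.univ = unitElt n t Finset.univ * D (mono n {a}) ∅ := by
  have : Nonempty (Fin n) := ⟨a⟩
  rw [algebra_eq_map ht, coeffSpace, if_neg hW] at hD
  obtain ⟨F, hF, rfl⟩ := hD
  rw [unitElt_apply_univ, toField]
  split_ifs
  · rw [LinearMap.comp_apply, Wmap_oneMScale_apply_mono_singleton]
    simp [omegaTop, mono, coeff_univ_eq_zero hF, Finset.univ_nonempty.ne_empty.symm]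
  · rw [Wmap_apply_mono_singleton, coeff_univ_eq_zero hF, zero_mul]

lemma sum_diagEntry_eq_zero [Nontrivial (Fin n)] {h : E n} (hh : h ∈ CT.St.algebra n) :
    ∑ k, diagEntry k h = 0 := by
  obtain ⟨F, hF, rfl⟩ := hh
  rw [← sum_coeff_singleton_eq_zero hF]
  refine Finset.sum_congr rfl fun k _ => ?_
  change Wmap n (oneMScale n F) (mono n {k}) {k} = F k {k}
  rw [Wmap_oneMScale_apply_mono_singleton]
  simp [omegaTop, mono, Finset.singleton_ne_univ k]

lemma lowering_mem_wtsp [Nontrivial (Fin n)] {t : CT} (ht : t ≠ CT.H) (k : Fin n) :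
    lowering t k ∈ wtsp t n (t.algebra n) (monoWeight t ∅ k) := by
  refine ⟨lowering_mem_algebra ht k, fun h => ?_⟩
  have hempty : sbL n h (monoField ∅ k) = monoWeight t ∅ k h • monoField ∅ k :=
    sbL_monoField_of_mem_diagSpan h.2.2 ∅ k
  by_cases hSt : t = CT.St
  · subst hSt
    have huniv : weightForm Finset.univ k (h : E n) = weightForm ∅ k (h : E n) := by
      rw [weightForm_apply, weightForm_apply, sum_diagEntry_eq_zero h.2.1, Finset.sum_empty]
    rw [lowering_St, map_sub, hempty, sbL_monoField_of_mem_diagSpan h.2.2, huniv, smul_sub]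
    rfl
  · rw [lowering, unitElt, if_neg hSt]
    exact hempty

lemma diffField_mem_weightVectors {t : CT} (ht : t ≠ CT.H) {T : Finset (Fin n)} {i j : Fin n}
    (hi : i ∉ T) (hj : j ∉ T) : diffField T i j ∈ weightVectors t n := by
  refine ⟨⟨T.card, sub_mem (mulX_mul_monoField_mem_epar i T i) (mulX_mul_monoField_mem_epar j T j)⟩,
    (∑ k ∈ T, diagEntry k).domRestrict _, diffField_mem_algebra ht hi hj, fun h => ?_⟩
  have hT {k : Fin n} (hk : k ∉ T) : sbL n h (mulX k * monoField T k) =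
      (∑ l ∈ T, diagEntry l (h : E n)) • (mulX k * monoField T k) := by
    rw [mulX_mul_monoField hk, map_smul, sbL_monoField_of_mem_diagSpan h.2.2, weightForm_apply,
      Finset.sum_insert hk, add_sub_cancel_left, smul_comm]
  rw [diffField, map_sub, hT hi, hT hj, LinearMap.domRestrict_apply, LinearMap.sum_apply, smul_sub]

lemma algebra_le_span_weightVectors [Nontrivial (Fin n)] {t : CT} (ht : t ≠ CT.H)
    (hev : t = CT.St → Even n) : t.algebra n ≤ Submodule.span ℂ (weightVectors t n) := by
  refine algebra_le ht (fun k => Submodule.subset_span ?_)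
    (fun S j hS hj => Submodule.subset_span ?_)
    fun T i j hi hj => Submodule.subset_span (diffField_mem_weightVectors ht hi hj)
  · exact ⟨⟨1, lowering_mem_epar hev k⟩, _, lowering_mem_wtsp ht k⟩
  · exact ⟨⟨_, monoField_mem_epar S j⟩, _, mem_wtsp_of_monoField (monoField_mem_algebra ht hS hj)⟩

lemma monoField_sub_monoField_mem_cartan {t : CT} (ht : t ≠ CT.H) (k l : Fin n) :
    monoField {k} k - monoField {l} l ∈ t.cartan n := by
  have hdiff : diffField ∅ k l = monoField {k} k - monoField {l} l := by
    simp [diffField, mulX_mul_monoField, insertSign, msign]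
  exact ⟨hdiff ▸ diffField_mem_algebra ht (Finset.notMem_empty k) (Finset.notMem_empty l),
    sub_mem (Submodule.subset_span ⟨k, rfl⟩) (Submodule.subset_span ⟨l, rfl⟩)⟩

lemma monoWeight_apply_monoField_sub {t : CT} (ht : t ≠ CT.H) (S : Finset (Fin n)) (i k l : Fin n) :
    monoWeight t S i ⟨_, monoField_sub_monoField_mem_cartan ht k l⟩ =
      ((weightCoord S i k - weightCoord S i l : ℤ) : ℂ) := by
  rw [monoWeight, LinearMap.domRestrict_apply, map_sub, weightForm_monoField_singleton,
    weightForm_monoField_singleton, Int.cast_sub]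

lemma weightCoord_sub_eq_of_monoWeight_eq {t : CT} (ht : t ≠ CT.H) {S A : Finset (Fin n)}
    {i a : Fin n} (h : monoWeight t S i = monoWeight t A a) (k l : Fin n) :
    weightCoord S i k - weightCoord S i l = weightCoord A a k - weightCoord A a l := by
  have := DFunLike.congr_fun h ⟨_, monoField_sub_monoField_mem_cartan ht k l⟩
  rw [monoWeight_apply_monoField_sub ht, monoWeight_apply_monoField_sub ht] at this
  exact_mod_cast this

lemma weightCoord_eq_of_monoWeight_W_eq {S A : Finset (Fin n)} {i a : Fin n}
    (h : monoWeight CT.W S i = monoWeight CT.W A a) (k : Fin n) :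
    weightCoord S i k = weightCoord A a k := by
  have hk : monoField {k} k ∈ CT.W.cartan n :=
    ⟨mulOp_mul_pd_mem_Wn _ k, Submodule.subset_span ⟨k, rfl⟩⟩
  have := DFunLike.congr_fun h ⟨_, hk⟩
  rw [monoWeight, monoWeight, LinearMap.domRestrict_apply, LinearMap.domRestrict_apply,
    weightForm_monoField_singleton, weightForm_monoField_singleton] at this
  exact_mod_cast this

lemma monoWeight_ne_zero [Nontrivial (Fin n)] {t : CT} (ht : t ≠ CT.H) {S : Finset (Fin n)}
    {i : Fin n} (hS : i ∈ S → S = Finset.univ) : monoWeight t S i ≠ 0 := by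
  obtain ⟨k, hk⟩ := exists_ne i
  intro h
  have := DFunLike.congr_fun h ⟨_, monoField_sub_monoField_mem_cartan ht k i⟩
  rw [monoWeight_apply_monoField_sub ht, LinearMap.zero_apply, Int.cast_eq_zero] at this
  by_cases hi : i ∈ S
  · simp [weightCoord, hS hi, hk] at this
  · by_cases hkS : k ∈ S <;> simp [weightCoord, hi, hk, hkS] at this

lemma eq_of_weightCoord_sub_eq {S A : Finset (Fin n)} {i a : Fin n} (hA : A.Nonempty)
    (ha : a ∉ A) (h : ∀ k l, weightCoord S i k - weightCoord S i l =
      weightCoord A a k - weightCoord A a l) : S = A ∧ i = a := by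
  obtain ⟨b, hb⟩ := hA
  have hba := h b a
  simp only [weightCoord] at h hba
  have hia : i = a := by grind
  subst hia
  refine ⟨Finset.ext fun k => ?_, rfl⟩
  have hki := h k i
  grind

lemma eq_of_weightCoord_sub_eq_empty [Nontrivial (Fin n)] {S : Finset (Fin n)} {i a : Fin n}
    (h : ∀ k l, weightCoord S i k - weightCoord S i l =
      weightCoord ∅ a k - weightCoord ∅ a l) : i = a ∧ (S = ∅ ∨ S = Finset.univ) := by
  obtain ⟨b, hb⟩ := exists_ne a
  have hia : i = a := by
    have hia' := h i a
    simp only [weightCoord] at h hia'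
    have := h b a
    grind
  subst hia
  refine ⟨rfl, ?_⟩
  have hS (k : Fin n) : k ∈ S ↔ i ∈ S := by
    have hki := h k i
    simp only [weightCoord] at hki
    grind
  by_cases hi : i ∈ S
  · exact Or.inr (Finset.eq_univ_of_forall fun k => (hS k).2 hi)
  · exact Or.inl (Finset.eq_empty_of_forall_notMem fun k hk => hi ((hS k).1 hk))

lemma eq_univ_of_weightCoord_eq {S : Finset (Fin n)} {i a : Fin n}
    (h : ∀ k, weightCoord S i k = weightCoord Finset.univ a k) : S = Finset.univ ∧ i = a := by
  simp only [weightCoord, Finset.mem_univ, if_true] at h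
  have hia : i = a := by
    have := h i
    grind
  refine ⟨Finset.eq_univ_of_forall fun k => ?_, hia⟩
  have := h k
  grind

lemma isRootVector_of_unique_monoWeight {t : CT} (ht : t ≠ CT.H) {A : Finset (Fin n)} {a : Fin n}
    (hmem : monoField A a ∈ t.algebra n) (hne : monoWeight t A a ≠ 0)
    (huniq : ∀ S i, monoWeight t S i = monoWeight t A a → S = A ∧ i = a) :
    IsRootVector t (monoField A a) := by
  refine ⟨⟨_, monoField_mem_epar A a⟩, _, hne, le_antisymm (fun D hD => ?_) ?_⟩
  · rw [eq_smul_monoField (algebra_le_Wn ht hD.1) A a fun S i hc =>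
      huniq S i (monoWeight_eq_of_coeff_ne_zero hD hc)]
    exact Submodule.smul_mem _ _ (Submodule.mem_span_singleton_self _)
  · exact (Submodule.span_singleton_le_iff_mem _ _).2 (mem_wtsp_of_monoField hmem)

lemma isRootVector_monoField [Nontrivial (Fin n)] {t : CT} (ht : t ≠ CT.H) {A : Finset (Fin n)}
    (hA : A.Nonempty) {a : Fin n} (ha : a ∉ A) : IsRootVector t (monoField A a) :=
  isRootVector_of_unique_monoWeight ht (monoField_mem_algebra ht hA fun h => absurd h ha)
    (monoWeight_ne_zero ht fun h => absurd h ha)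
    fun _ _ h => eq_of_weightCoord_sub_eq hA ha (weightCoord_sub_eq_of_monoWeight_eq ht h)

lemma isRootVector_monoField_univ [Nontrivial (Fin n)] (a : Fin n) :
    IsRootVector CT.W (monoField Finset.univ a) :=
  isRootVector_of_unique_monoWeight (by decide) (mulOp_mul_pd_mem_Wn _ a)
    (monoWeight_ne_zero (by decide) fun _ => rfl)
    fun _ _ h => eq_univ_of_weightCoord_eq (weightCoord_eq_of_monoWeight_W_eq h)

lemma apply_mono_singleton_eq_smul_unitElt [Nontrivial (Fin n)] {t : CT} (ht : t ≠ CT.H) {D : E n}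
    {a : Fin n} (hD : D ∈ wtsp t n (t.algebra n) (monoWeight t ∅ a)) :
    D (mono n {a}) = D (mono n {a}) ∅ • unitElt n t := by
  funext S
  rw [Pi.smul_apply, smul_eq_mul]
  rcases eq_or_ne S ∅ with rfl | hempty
  · rw [unitElt_apply_empty, mul_one]
  rcases eq_or_ne S Finset.univ with rfl | huniv
  · by_cases hW : t = CT.W
    · subst hW
      rw [unitElt_apply_univ, if_neg (by decide), mul_zero]
      by_contra hc
      have hcoord := weightCoord_eq_of_monoWeight_W_eq (monoWeight_eq_of_coeff_ne_zero hD hc) a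
      simp [weightCoord] at hcoord
    · rw [apply_mono_singleton_univ ht hW hD.1, mul_comm]
  · rw [unitElt_apply_of_ne t hempty huniv, mul_zero]
    by_contra hc
    exact (eq_of_weightCoord_sub_eq_empty (weightCoord_sub_eq_of_monoWeight_eq ht
      (monoWeight_eq_of_coeff_ne_zero hD hc))).2.elim hempty huniv

lemma isRootVector_lowering [Nontrivial (Fin n)] {t : CT} (ht : t ≠ CT.H)
    (hev : t = CT.St → Even n) (a : Fin n) : IsRootVector t (lowering t a) := by
  refine ⟨⟨1, lowering_mem_epar hev a⟩, _, monoWeight_ne_zero ht (S := ∅) (i := a) (by simp),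
    le_antisymm (fun D hD => ?_)
      ((Submodule.span_singleton_le_iff_mem _ _).2 (lowering_mem_wtsp ht a))⟩
  refine Submodule.mem_span_singleton.2 ⟨D (mono n {a}) ∅, ?_⟩
  refine Wn_ext (Submodule.smul_mem _ _ (mulOp_mul_pd_mem_Wn _ a)) (algebra_le_Wn ht hD.1)
    fun i => ?_
  rw [LinearMap.smul_apply, lowering_apply_mono_singleton]
  split_ifs with hai
  · rw [← hai, ← apply_mono_singleton_eq_smul_unitElt ht hD]
  · rw [smul_zero]
    refine funext fun S => ?_
    by_contra hc
    exact hai (eq_of_weightCoord_sub_eq_empty (weightCoord_sub_eq_of_monoWeight_eq ht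
      (monoWeight_eq_of_coeff_ne_zero hD (Ne.symm hc)))).1.symm

/-! ### Linking the scalars -/

lemma sbL_apply_of_apply_eq_zero {p q : ZMod 2} {D F : E n} (hD : D ∈ epar n p)
    (hF : F ∈ epar n q) {g : Lambda n} (hg : D g = 0) : sbL n D F g = D (F g) := by
  rw [sbL_of_mem_epar hD hF, LinearMap.sub_apply, LinearMap.smul_apply, Module.End.mul_apply,
    Module.End.mul_apply, hg, map_zero, smul_zero, sub_zero]

lemma sbL_ne_zero_symm {p q : ZMod 2} {D F : E n} (hD : D ∈ epar n p) (hF : F ∈ epar n q)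
    (h : sbL n D F ≠ 0) : sbL n F D ≠ 0 := by
  intro h'
  rw [sbL_antisymm hD hF, h', smul_zero, neg_zero] at h
  exact h rfl

lemma mulOp_unitElt_apply_of_ne_univ (t : CT) (g : Lambda n) {T : Finset (Fin n)}
    (hT : T ≠ Finset.univ) : mulOp n (unitElt n t) g T = g T := by
  rw [unitElt]
  split_ifs
  · simp [mulOp_oneM_apply, omegaTop, mono, hT]
  · exact congrFun (LinearMap.congr_fun mulMono_empty g) T

lemma lowering_apply_mono_erase (t : CT) {k : Fin n} {S : Finset (Fin n)} (hk : k ∈ S) :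
    lowering t k (mono n S) (S.erase k) = insertSign k S := by
  have hne : S.erase k ≠ Finset.univ := fun h => Finset.notMem_erase k S (h ▸ Finset.mem_univ k)
  rw [lowering, Module.End.mul_apply, mulOp_unitElt_apply_of_ne_univ t _ hne, pd_apply,
    if_neg (Finset.notMem_erase k S), Finset.insert_erase hk, insertSign_erase_self hk, mono,
    if_pos rfl, mul_one]

lemma sbL_lowering_monoField_ne_zero {t : CT} (hev : t = CT.St → Even n) {S : Finset (Fin n)}
    {j k : Fin n} (hk : k ∈ S) (hkj : k ≠ j) : sbL n (lowering t k) (monoField S j) ≠ 0 := by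
  intro h
  have happly := sbL_apply_of_apply_eq_zero (lowering_mem_epar hev k) (monoField_mem_epar S j)
    (g := mono n {j}) (by rw [lowering_apply_mono_singleton, if_neg hkj])
  rw [h, LinearMap.zero_apply, monoField_apply_mono_singleton, if_pos rfl] at happly
  apply insertSign_ne_zero k S
  rw [← lowering_apply_mono_erase t hk, ← happly, Pi.zero_apply]

lemma sbL_monoField_monoField_ne_zero (a : Fin n) {b c : Fin n} (hbc : b ≠ c) :
    sbL n (monoField {a} b) (monoField {b} c) ≠ 0 := by
  intro h
  have happly := sbL_apply_of_apply_eq_zero (monoField_mem_epar {a} b) (monoField_mem_epar {b} c)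
    (g := mono n {c}) (by rw [monoField_apply_mono_singleton, if_neg hbc])
  rw [h, LinearMap.zero_apply, monoField_apply_mono_singleton, if_pos rfl,
    monoField_apply_mono_singleton, if_pos rfl] at happly
  simpa [mono] using congrFun happly {a}

section Linking

variable {t : CT} {pf : ZMod 2} {f : E n →ₗ[ℂ] E n →ₗ[ℂ] E n} {lam : ℂ}

lemma monoField_mem_rightInner [Nontrivial (Fin n)] (ht : t ≠ CT.H) (hev : t = CT.St → Even n)
    (hf : IsSuperBider n (t.algebra n) pf f) (hw : t.HasWeight n f 0) {k : Fin n}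
    (hlow : lowering t k ∈ leftInner (t.algebra n) f lam) {S : Finset (Fin n)} {j : Fin n}
    (hk : k ∈ S) (hkj : k ≠ j) (hroot : IsRootVector t (monoField S j)) :
    monoField S j ∈ rightInner (t.algebra n) f lam :=
  mem_rightInner_of_mem_leftInner hf hw (algebra_le_span_weightVectors ht hev) hlow
    (lowering_mem_algebra ht k) hroot (sbL_lowering_monoField_ne_zero hev hk hkj)

lemma lowering_mem_leftInner (hn : 3 ≤ n) (ht : t ≠ CT.H) (hev : t = CT.St → Even n)
    (hf : IsSuperBider n (t.algebra n) pf f) (hw : t.HasWeight n f 0) {k₀ : Fin n}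
    (hlow : lowering t k₀ ∈ leftInner (t.algebra n) f lam) (k : Fin n) :
    lowering t k ∈ leftInner (t.algebra n) f lam := by
  have : Nontrivial (Fin n) := Fin.nontrivial_iff_two_le.2 (by omega)
  obtain ⟨j, -, hj⟩ : ∃ j ∈ Finset.univ, j ∉ ({k, k₀} : Finset (Fin n)) :=
    Finset.exists_mem_notMem_of_card_lt_card <| Finset.card_le_two.trans_lt <| by
      rwa [Finset.card_univ, Fintype.card_fin]
  obtain ⟨hjk, hjk₀⟩ : j ≠ k ∧ j ≠ k₀ := by simpa using hj
  have hroot : IsRootVector t (monoField {k, k₀} j) :=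
    isRootVector_monoField ht (Finset.insert_nonempty _ _) hj
  exact mem_leftInner_of_mem_rightInner hf hw (algebra_le_span_weightVectors ht hev)
    (monoField_mem_rightInner ht hev hf hw hlow (by simp) hjk₀.symm hroot)
    (monoField_mem_algebra ht (Finset.insert_nonempty _ _) fun h => absurd h hj)
    (isRootVector_lowering ht hev k) (sbL_lowering_monoField_ne_zero hev (by simp) hjk.symm)

lemma lowering_mem_rightInner [Nontrivial (Fin n)] (ht : t ≠ CT.H) (hev : t = CT.St → Even n)
    (hf : IsSuperBider n (t.algebra n) pf f) (hw : t.HasWeight n f 0)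
    (hroot : ∀ i j : Fin n, i ≠ j → monoField {i} j ∈ rightInner (t.algebra n) f lam) (k : Fin n) :
    lowering t k ∈ rightInner (t.algebra n) f lam := by
  obtain ⟨j, hj⟩ := exists_ne k
  have hjk : j ∉ ({k} : Finset (Fin n)) := by simpa using hj
  have hkj : k ∉ ({j} : Finset (Fin n)) := by simpa using hj.symm
  have hsp := algebra_le_span_weightVectors ht hev
  have hleft : monoField {k} j ∈ leftInner (t.algebra n) f lam :=
    mem_leftInner_of_mem_rightInner hf hw hsp (hroot j k hj)
      (monoField_mem_algebra ht (Finset.singleton_nonempty j) fun h => absurd h hkj)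
      (isRootVector_monoField ht (Finset.singleton_nonempty k) hjk)
      (sbL_monoField_monoField_ne_zero k hj)
  exact mem_rightInner_of_mem_leftInner hf hw hsp hleft
    (monoField_mem_algebra ht (Finset.singleton_nonempty k) fun h => absurd h hjk)
    (isRootVector_lowering ht hev k)
    (sbL_ne_zero_symm (lowering_mem_epar hev k) (monoField_mem_epar {k} j)
      (sbL_lowering_monoField_ne_zero hev (Finset.mem_singleton_self k) hj.symm))

end Linking

end

theorem superBider_zero_weight_inner_general (n : ℕ) (hn : 3 ≤ n) (t : CT)
    (ht : t = CT.W ∨ t = CT.S ∨ (t = CT.St ∧ Even n))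
    (pf : ZMod 2) (f : E n →ₗ[ℂ] E n →ₗ[ℂ] E n)
    (hf : IsSuperBider n (t.algebra n) pf f)
    (hw : t.HasWeight n f 0) :
    ∃ lam : ℂ, ∀ x ∈ t.algebra n, ∀ y ∈ t.algebra n, f x y = lam • sbL n x y := by
  have : Nontrivial (Fin n) := Fin.nontrivial_iff_two_le.2 (by omega)
  have hH : t ≠ CT.H := by rintro rfl; simp at ht
  have hev : t = CT.St → Even n := by rintro rfl; simpa using ht
  have hsp := algebra_le_span_weightVectors hH hev
  obtain ⟨lam, hlam⟩ :=
    exists_mem_leftInner hf hw hsp (isRootVector_lowering hH hev ⟨0, by omega⟩)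
  have hleft := lowering_mem_leftInner hn hH hev hf hw hlam
  have hroot (S : Finset (Fin n)) (j : Fin n) (hS : S.Nonempty) (hj : j ∉ S) :
      monoField S j ∈ rightInner (t.algebra n) f lam := by
    obtain ⟨k, hk⟩ := hS
    exact monoField_mem_rightInner hH hev hf hw (hleft k) hk (ne_of_mem_of_not_mem hk hj)
      (isRootVector_monoField hH ⟨k, hk⟩ hj)
  have hright := lowering_mem_rightInner hH hev hf hw fun i j hij =>
    hroot {i} j (Finset.singleton_nonempty i) (by simpa using hij.symm)
  have htop (hW : t = CT.W) (i : Fin n) :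
      monoField Finset.univ i ∈ rightInner (t.algebra n) f lam := by
    obtain ⟨k, hki⟩ := exists_ne i
    exact monoField_mem_rightInner hH hev hf hw (hleft k) (Finset.mem_univ k) hki
      (hW ▸ isRootVector_monoField_univ i)
  exact ⟨lam, fun x hx y hy => algebra_le_of_isBracketClosedIn hH
    (isBracketClosedIn_rightInner hf hsp lam) hright hroot htop hy x hx⟩

/-- For `L = W(n)`, `S(n)` or `S̃(n)` (`n` even), `n ≥ 4`, a
super-biderivation `f ∈ BDer(L)_θ` of zero weight is inner: there is `λ ∈ ℂ` with
`f(x,y) = λ[x,y]` for all `x, y ∈ L`. -/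
theorem superBider_zero_weight_inner (n : ℕ) (hn : 4 ≤ n) (t : CT)
    (ht : t = CT.W ∨ t = CT.S ∨ (t = CT.St ∧ Even n))
    (pf : ZMod 2) (f : E n →ₗ[ℂ] E n →ₗ[ℂ] E n)
    (hf : IsSuperBider n (t.algebra n) pf f)
    (hw : t.HasWeight n f 0) :
    ∃ lam : ℂ, ∀ x ∈ t.algebra n, ∀ y ∈ t.algebra n, f x y = lam • sbL n x y :=
  superBider_zero_weight_inner_general n (by omega) t ht pf f hf hw

end CartanSuper
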